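/- arXiv:2211.04697 — 10 statements merged into one kernel-verified Lean document; each statement's English description precedes it below -/
import Mathlib

section
/- Let Γ > 1, e ∈ (0,1), W₋ := (1−Γ⁻¹)e + Γ⁻¹, W₊ := (1−Γ)e + Γ, and α* := Γ/(1+Γ), and let Q be the unique real number with F(Q) = α*. Define h*(y) := W₋ for y ≤ Q and h*(y) := W₊ for y > Q. Then ∫ h* dμ = 1, and for every measurable h : ℝ → ℝ satisfying W₋ ≤ h(y) ≤ W₊ for μ-almost every y and ∫ h dμ = 1, one has ∫ y·h(y) dμ(y) ≤ ∫ y·h*(y) dμ(y) = W₊·E[Y·1{Y>Q}] + W₋·E[Y·1{Y≤Q}]. (Quantile-balancing solution: sharp upper bound of the linear program with the moment constraint.) -/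
open MeasureTheory

/-!
Since `h` and `h*` have the same mean, replacing `y` by `y - Q` changes `∫ y h` and `∫ y h*` by the
same amount. After this shift `h*` is optimal pointwise: it takes the least admissible value where
`y - Q ≤ 0` and the greatest one where `y - Q > 0`.
-/

section Crossing

variable {α : Type*} {mα : MeasurableSpace α} {μ : Measure α} {f g h : α → ℝ} {c : ℝ}

theorem integral_mul_le_integral_mul_of_crossing (hg : Integrable g μ) (hh : Integrable h μ)
    (hfg : Integrable (fun x => f x * g x) μ) (hfh : Integrable (fun x => f x * h x) μ)
    (h_below : ∀ᵐ x ∂μ, f x < c → h x ≤ g x) (h_above : ∀ᵐ x ∂μ, c < f x → g x ≤ h x)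
    (h_int : ∫ x, g x ∂μ = ∫ x, h x ∂μ) :
    ∫ x, f x * g x ∂μ ≤ ∫ x, f x * h x ∂μ := by
  have shifted_le : ∫ x, (f x * g x - c * g x) ∂μ ≤ ∫ x, (f x * h x - c * h x) ∂μ := by
    refine integral_mono_ae (hfg.sub (hg.const_mul c)) (hfh.sub (hh.const_mul c)) ?_
    filter_upwards [h_below, h_above] with x hx_below hx_above
    simp only [← sub_mul]
    rcases lt_trichotomy (f x) c with hlt | heq | hgt
    · exact mul_le_mul_of_nonpos_left (hx_below hlt) (sub_nonpos.2 hlt.le)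
    · simp only [heq, sub_self, zero_mul, le_refl]
    · exact mul_le_mul_of_nonneg_left (hx_above hgt) (sub_nonneg.2 hgt.le)
  rw [integral_sub hfg (hg.const_mul c), integral_sub hfh (hh.const_mul c),
    integral_const_mul, integral_const_mul, h_int] at shifted_le
  exact (sub_le_sub_iff_right _).1 shifted_le

end Crossing

/-- The weight equal to `a` where `X ≤ c` and to `b` where `c < X`: the form of the optimal weight
`h*`. No order between `a` and `b` is imposed. -/
noncomputable def thresholdWeight {Ω : Type*} (X : Ω → ℝ) (c a b : ℝ) (ω : Ω) : ℝ :=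
  if X ω ≤ c then a else b

section Threshold

variable {Ω : Type*} {X : Ω → ℝ} {c a b : ℝ}

theorem thresholdWeight_of_le {ω : Ω} (hω : X ω ≤ c) : thresholdWeight X c a b ω = a :=
  if_pos hω

theorem thresholdWeight_of_lt {ω : Ω} (hω : c < X ω) : thresholdWeight X c a b ω = b :=
  if_neg hω.not_ge

theorem abs_thresholdWeight_le (ω : Ω) : |thresholdWeight X c a b ω| ≤ max |a| |b| := by
  rcases le_or_gt (X ω) c with hω | hω
  · rw [thresholdWeight_of_le hω]
    exact le_max_left _ _
  · rw [thresholdWeight_of_lt hω]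
    exact le_max_right _ _

variable {mΩ : MeasurableSpace Ω} {μ : Measure Ω}

theorem aestronglyMeasurable_thresholdWeight (hX : AEMeasurable X μ) :
    AEStronglyMeasurable (thresholdWeight X c a b) μ :=
  ((Measurable.ite measurableSet_Iic measurable_const measurable_const).comp_aemeasurable
    hX).aestronglyMeasurable

theorem integrable_thresholdWeight [IsFiniteMeasure μ] (hX : AEMeasurable X μ) :
    Integrable (thresholdWeight X c a b) μ :=
  .of_bound (aestronglyMeasurable_thresholdWeight hX) _ (.of_forall abs_thresholdWeight_le)

theorem integrable_mul_thresholdWeight {f : Ω → ℝ} (hX : AEMeasurable X μ) (hf : Integrable f μ) :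
    Integrable (fun ω => f ω * thresholdWeight X c a b ω) μ :=
  hf.mul_bdd (aestronglyMeasurable_thresholdWeight hX) (.of_forall abs_thresholdWeight_le)

theorem integral_mul_thresholdWeight {f : Ω → ℝ} (hX : AEMeasurable X μ) (hf : Integrable f μ) :
    ∫ ω, f ω * thresholdWeight X c a b ω ∂μ =
      b * ∫ ω in {ω | c < X ω}, f ω ∂μ + a * ∫ ω in {ω | X ω ≤ c}, f ω ∂μ := by
  have h_le : NullMeasurableSet {ω | X ω ≤ c} μ := nullMeasurableSet_le hX aemeasurable_const
  have h_lt : NullMeasurableSet {ω | c < X ω} μ := nullMeasurableSet_lt aemeasurable_const hX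
  have compl_eq : {ω | X ω ≤ c}ᶜ = {ω | c < X ω} := by
    simp only [Set.compl_ofPred, not_le]
  have below : ∫ ω in {ω | X ω ≤ c}, f ω * thresholdWeight X c a b ω ∂μ =
      a * ∫ ω in {ω | X ω ≤ c}, f ω ∂μ := by
    rw [← integral_const_mul]
    exact setIntegral_congr_fun₀ h_le fun ω hω => by
      simp only [thresholdWeight_of_le hω, mul_comm]
  have above : ∫ ω in {ω | c < X ω}, f ω * thresholdWeight X c a b ω ∂μ =
      b * ∫ ω in {ω | c < X ω}, f ω ∂μ := by
    rw [← integral_const_mul]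
    exact setIntegral_congr_fun₀ h_lt fun ω hω => by
      simp only [thresholdWeight_of_lt hω, mul_comm]
  rw [← integral_add_compl₀ h_le (integrable_mul_thresholdWeight hX hf), compl_eq, below, above,
    add_comm]

theorem integral_thresholdWeight [IsFiniteMeasure μ] (hX : AEMeasurable X μ) :
    ∫ ω, thresholdWeight X c a b ω ∂μ =
      b * μ.real {ω | c < X ω} + a * μ.real {ω | X ω ≤ c} := by
  simpa only [one_mul, setIntegral_const, smul_eq_mul, mul_one] using
    integral_mul_thresholdWeight (a := a) (b := b) (c := c) hX (integrable_const (1 : ℝ))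

theorem integral_thresholdWeight_eq_one_of_quantile [IsProbabilityMeasure μ] {Γ : ℝ}
    (hX : AEMeasurable X μ) (hΓ : 0 < Γ) (e : ℝ) (hc : μ.real {ω | X ω ≤ c} = Γ / (1 + Γ)) :
    ∫ ω, thresholdWeight X c ((1 - Γ⁻¹) * e + Γ⁻¹) ((1 - Γ) * e + Γ) ω ∂μ = 1 := by
  have h_above : μ.real {ω | c < X ω} = 1 - Γ / (1 + Γ) := by
    rw [← hc, ← probReal_compl_eq_one_sub₀ (nullMeasurableSet_le hX aemeasurable_const)]
    simp only [Set.compl_ofPred, not_le]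
  rw [integral_thresholdWeight hX, h_above, hc]
  field_simp
  ring

theorem integral_mul_le_integral_mul_thresholdWeight [IsFiniteMeasure μ] {h : Ω → ℝ}
    (hX : Integrable X μ) (hh : AEStronglyMeasurable h μ) (h_mem : ∀ᵐ ω ∂μ, a ≤ h ω ∧ h ω ≤ b)
    (h_int : ∫ ω, h ω ∂μ = ∫ ω, thresholdWeight X c a b ω ∂μ) :
    ∫ ω, X ω * h ω ∂μ ≤ ∫ ω, X ω * thresholdWeight X c a b ω ∂μ := by
  have h_bdd : ∀ᵐ ω ∂μ, ‖h ω‖ ≤ max |a| |b| :=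
    h_mem.mono fun ω hω => abs_le_max_abs_abs hω.1 hω.2
  refine integral_mul_le_integral_mul_of_crossing (c := c) (.of_bound hh _ h_bdd)
    (integrable_thresholdWeight hX.aemeasurable) (hX.mul_bdd hh h_bdd)
    (integrable_mul_thresholdWeight hX.aemeasurable hX) ?_ ?_ h_int
  · filter_upwards [h_mem] with ω hω hlt
    rw [thresholdWeight_of_le hlt.le]
    exact hω.1
  · filter_upwards [h_mem] with ω hω hgt
    rw [thresholdWeight_of_lt hgt]
    exact hω.2

end Threshold

theorem stmt_2_general {Ω : Type*} {mΩ : MeasurableSpace Ω} {μ : Measure Ω}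
    [IsProbabilityMeasure μ] {X : Ω → ℝ} (hX : Integrable X μ) {Γ : ℝ} (hΓ : 0 < Γ) (e : ℝ) {Q : ℝ}
    (hQ : μ.real {ω | X ω ≤ Q} = Γ / (1 + Γ)) :
    let hstar := thresholdWeight X Q ((1 - Γ⁻¹) * e + Γ⁻¹) ((1 - Γ) * e + Γ)
    ∫ ω, hstar ω ∂μ = 1 ∧
    ∫ ω, X ω * hstar ω ∂μ =
      ((1 - Γ) * e + Γ) * ∫ ω in {ω | Q < X ω}, X ω ∂μ +
        ((1 - Γ⁻¹) * e + Γ⁻¹) * ∫ ω in {ω | X ω ≤ Q}, X ω ∂μ ∧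
    ∀ h : Ω → ℝ, AEStronglyMeasurable h μ →
      (∀ᵐ ω ∂μ, (1 - Γ⁻¹) * e + Γ⁻¹ ≤ h ω ∧ h ω ≤ (1 - Γ) * e + Γ) →
      ∫ ω, h ω ∂μ = 1 →
      ∫ ω, X ω * h ω ∂μ ≤ ∫ ω, X ω * hstar ω ∂μ := by
  have mean_one := integral_thresholdWeight_eq_one_of_quantile hX.aemeasurable hΓ e hQ
  exact ⟨mean_one, integral_mul_thresholdWeight hX.aemeasurable hX, fun h hh h_mem h_int =>
    integral_mul_le_integral_mul_thresholdWeight hX hh h_mem (h_int.trans mean_one.symm)⟩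

/-- Quantile-balancing solution: sharp upper bound of the linear program with the
moment constraint (Dorn–Guo).  `Q` is the `Γ/(1+Γ)`-quantile of `μ`,
`hstar = W₋` below `Q` and `W₊` above `Q`; it integrates to one and maximizes
`∫ y h(y) dμ` among mean-one weights `h` with `W₋ ≤ h ≤ W₊` a.e. -/
theorem stmt_2 (μ : Measure ℝ) [IsProbabilityMeasure μ] (p : ℝ → ℝ)
    (hp_cont : Continuous p) (hp_pos : ∀ x, 0 < p x)
    (hμ : μ = MeasureTheory.volume.withDensity fun x => ENNReal.ofReal (p x))
    (hmom : Integrable (fun y => y ^ 2) μ)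
    (Γ e : ℝ) (hΓ : 1 < Γ) (he : e ∈ Set.Ioo (0 : ℝ) 1)
    (Q : ℝ) (hQ : (μ (Set.Iic Q)).toReal = Γ / (1 + Γ))
    (hstar : ℝ → ℝ)
    (hhstar : ∀ y, hstar y = if y ≤ Q then (1 - Γ⁻¹) * e + Γ⁻¹ else (1 - Γ) * e + Γ) :
    (∫ y, hstar y ∂μ) = 1 ∧
    (∫ y, y * hstar y ∂μ) =
      ((1 - Γ) * e + Γ) * (∫ y in Set.Ioi Q, y ∂μ) +
        ((1 - Γ⁻¹) * e + Γ⁻¹) * (∫ y in Set.Iic Q, y ∂μ) ∧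
    ∀ h : ℝ → ℝ, Measurable h →
      (∀ᵐ y ∂μ, (1 - Γ⁻¹) * e + Γ⁻¹ ≤ h y ∧ h y ≤ (1 - Γ) * e + Γ) →
      (∫ y, h y ∂μ) = 1 →
      (∫ y, y * h y ∂μ) ≤ ∫ y, y * hstar y ∂μ := by
  obtain rfl : hstar = thresholdWeight id Q _ _ := funext hhstar
  have h_id : Integrable id μ :=
    ((memLp_two_iff_integrable_sq aestronglyMeasurable_id).2 hmom).integrable one_le_two
  obtain ⟨mean_one, value, optimal⟩ := stmt_2_general h_id (zero_lt_one.trans hΓ) e hQ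
  exact ⟨mean_one, value, fun h hh => optimal h hh.aestronglyMeasurable⟩
end

section
/- Let Γ > 1, e ∈ (0,1), W₋ := (1−Γ⁻¹)e + Γ⁻¹, W₊ := (1−Γ)e + Γ, and let Q' be the unique real number with F(Q') = 1/(1+Γ). Define h*(y) := W₊ for y ≤ Q' and h*(y) := W₋ for y > Q'. Then ∫ h* dμ = 1, and for every measurable h : ℝ → ℝ satisfying W₋ ≤ h(y) ≤ W₊ for μ-almost every y and ∫ h dμ = 1, one has ∫ y·h(y) dμ(y) ≥ ∫ y·h*(y) dμ(y) = W₊·E[Y·1{Y≤Q'}] + W₋·E[Y·1{Y>Q'}]. (Quantile-balancing solution: sharp lower bound of the linear program with the moment constraint.) -/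
open MeasureTheory

/-!
With `w` equal to `hi` on `{f ≤ c}` and to `lo` on `{c < f}`, the product `(f - c) * w` is
pointwise the smallest value of `(f - c) * t` over `t ∈ [lo, hi]`. Integrating this against any
competitor `h` with the same total mass as `w` cancels the terms in `c` (a Lagrange multiplier for
the mass constraint) and leaves `∫ f w ≤ ∫ f h`. The quantile level `1 / (1 + Γ)` is the one
at which the two-level weight with values `W₊` and `W₋` has mass one.
-/

/-- The two-level weight with value `hi` on the sublevel set `{f ≤ c}` and `lo` on `{c < f}`.
It is the optimizer of the bathtub principle, with `c` as Lagrange multiplier. -/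
noncomputable def bathtubWeight {α : Type*} (f : α → ℝ) (c lo hi : ℝ) (x : α) : ℝ :=
  if f x ≤ c then hi else lo

/-- The extreme weight of the marginal sensitivity model with odds-ratio parameter `Γ` and
propensity `e`. The paper's `W₊` is `sensitivityWeight Γ e`, and its `W₋` is
`sensitivityWeight Γ⁻¹ e`. -/
noncomputable def sensitivityWeight (Γ e : ℝ) : ℝ :=
  (1 - Γ) * e + Γ

namespace bathtubWeight

variable {α : Type*} {f : α → ℝ}

theorem of_le {c : ℝ} (lo hi : ℝ) {x : α} (hx : f x ≤ c) : bathtubWeight f c lo hi x = hi :=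
  if_pos hx

theorem of_lt {c : ℝ} (lo hi : ℝ) {x : α} (hx : c < f x) : bathtubWeight f c lo hi x = lo :=
  if_neg hx.not_ge

theorem norm_le_max (f : α → ℝ) (c lo hi : ℝ) (x : α) :
    ‖bathtubWeight f c lo hi x‖ ≤ max ‖lo‖ ‖hi‖ := by
  rcases le_or_gt (f x) c with hx | hx
  · rw [of_le lo hi hx]
    exact le_max_right ‖lo‖ ‖hi‖
  · rw [of_lt lo hi hx]
    exact le_max_left ‖lo‖ ‖hi‖

theorem sub_mul_le_sub_mul (f : α → ℝ) (c : ℝ) {lo hi t : ℝ} (ht : lo ≤ t ∧ t ≤ hi) (x : α) :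
    (f x - c) * bathtubWeight f c lo hi x ≤ (f x - c) * t := by
  rcases le_or_gt (f x) c with hx | hx
  · rw [of_le lo hi hx]
    exact mul_le_mul_of_nonpos_left ht.2 (sub_nonpos.2 hx)
  · rw [of_lt lo hi hx]
    exact mul_le_mul_of_nonneg_left ht.1 (sub_nonneg.2 hx.le)

variable [MeasurableSpace α] {μ : Measure α}

theorem aestronglyMeasurable (hf : AEMeasurable f μ) (c lo hi : ℝ) :
    AEStronglyMeasurable (bathtubWeight f c lo hi) μ :=
  ((Measurable.ite measurableSet_Iic measurable_const measurable_const).comp_aemeasurable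
    hf).aestronglyMeasurable

theorem integrable [IsFiniteMeasure μ] (hf : AEMeasurable f μ) (c lo hi : ℝ) :
    Integrable (bathtubWeight f c lo hi) μ :=
  .of_bound (aestronglyMeasurable hf c lo hi) _ (.of_forall (norm_le_max f c lo hi))

theorem integrable_mul {g : α → ℝ} (hf : AEMeasurable f μ) (hg : Integrable g μ) (c lo hi : ℝ) :
    Integrable (fun x => g x * bathtubWeight f c lo hi x) μ :=
  hg.mul_bdd (aestronglyMeasurable hf c lo hi) (.of_forall (norm_le_max f c lo hi))

theorem integral_mul {g : α → ℝ} (hf : AEMeasurable f μ) (hg : Integrable g μ) (c lo hi : ℝ) :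
    ∫ x, g x * bathtubWeight f c lo hi x ∂μ =
      hi * (∫ x in {x | f x ≤ c}, g x ∂μ) + lo * ∫ x in {x | c < f x}, g x ∂μ := by
  have h_low : NullMeasurableSet {x | f x ≤ c} μ := nullMeasurableSet_le hf aemeasurable_const
  have h_high : NullMeasurableSet {x | c < f x} μ := nullMeasurableSet_lt aemeasurable_const hf
  have h_compl : {x | f x ≤ c}ᶜ = {x | c < f x} := by ext; simp
  rw [← integral_add_compl₀ h_low (integrable_mul hf hg c lo hi), h_compl,
    ← integral_const_mul, ← integral_const_mul]
  congr 1
  · refine setIntegral_congr_fun₀ h_low fun x (hx : f x ≤ c) => ?_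
    simp only [of_le lo hi hx, mul_comm]
  · refine setIntegral_congr_fun₀ h_high fun x (hx : c < f x) => ?_
    simp only [of_lt lo hi hx, mul_comm]

theorem integral_eq [IsFiniteMeasure μ] (hf : AEMeasurable f μ) (c lo hi : ℝ) :
    ∫ x, bathtubWeight f c lo hi x ∂μ =
      hi * μ.real {x | f x ≤ c} + lo * μ.real {x | c < f x} := by
  simpa using integral_mul hf (integrable_const (1 : ℝ)) c lo hi

theorem integral_mul_le {h : α → ℝ} {c lo hi : ℝ} (hf : Integrable f μ)
    (hw : Integrable (bathtubWeight f c lo hi) μ) (hh : Integrable h μ)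
    (h_mem : ∀ᵐ x ∂μ, lo ≤ h x ∧ h x ≤ hi)
    (h_mass : ∫ x, h x ∂μ = ∫ x, bathtubWeight f c lo hi x ∂μ) :
    ∫ x, f x * bathtubWeight f c lo hi x ∂μ ≤ ∫ x, f x * h x ∂μ := by
  have hfw := integrable_mul hf.aemeasurable hf c lo hi
  have h_norm : ∀ᵐ x ∂μ, ‖h x‖ ≤ max |lo| |hi| :=
    h_mem.mono fun _ hx => abs_le_max_abs_abs hx.1 hx.2
  have hfh : Integrable (fun x => f x * h x) μ := hf.mul_bdd hh.aestronglyMeasurable h_norm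
  have h_tilted : ∫ x, (f x * bathtubWeight f c lo hi x - c * bathtubWeight f c lo hi x) ∂μ ≤
      ∫ x, (f x * h x - c * h x) ∂μ := by
    refine integral_mono_ae (hfw.sub (hw.const_mul c)) (hfh.sub (hh.const_mul c)) ?_
    filter_upwards [h_mem] with x hx
    simpa only [sub_mul] using sub_mul_le_sub_mul f c hx x
  rw [integral_sub hfw (hw.const_mul c), integral_sub hfh (hh.const_mul c),
    integral_const_mul, integral_const_mul, h_mass] at h_tilted
  exact (sub_le_sub_iff_right _).1 h_tilted

theorem integral_sensitivityWeight_eq_one [IsProbabilityMeasure μ] (hf : AEMeasurable f μ)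
    {Γ c : ℝ} (hΓ : 0 < Γ) (hc : μ.real {x | f x ≤ c} = 1 / (1 + Γ)) (e : ℝ) :
    ∫ x, bathtubWeight f c (sensitivityWeight Γ⁻¹ e) (sensitivityWeight Γ e) x ∂μ = 1 := by
  have h_high : μ.real {x | c < f x} = 1 - 1 / (1 + Γ) := by
    have h_compl : {x | f x ≤ c}ᶜ = {x | c < f x} := by ext; simp
    rw [← h_compl, probReal_compl_eq_one_sub₀ (nullMeasurableSet_le hf aemeasurable_const), hc]
  rw [integral_eq hf, hc, h_high, sensitivityWeight, sensitivityWeight]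
  field_simp
  ring

end bathtubWeight

theorem stmt_3_general {Ω : Type*} [MeasurableSpace Ω] {μ : Measure Ω} [IsProbabilityMeasure μ]
    {Y : Ω → ℝ} (hY : Integrable Y μ) {Γ : ℝ} (hΓ : 0 < Γ) (e : ℝ)
    {q : ℝ} (hq : μ.real {ω | Y ω ≤ q} = 1 / (1 + Γ)) {w : Ω → ℝ}
    (hw : w = bathtubWeight Y q (sensitivityWeight Γ⁻¹ e) (sensitivityWeight Γ e)) :
    (∫ ω, w ω ∂μ) = 1 ∧
    (∫ ω, Y ω * w ω ∂μ) =
      sensitivityWeight Γ e * (∫ ω in {ω | Y ω ≤ q}, Y ω ∂μ) +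
        sensitivityWeight Γ⁻¹ e * (∫ ω in {ω | q < Y ω}, Y ω ∂μ) ∧
    ∀ h : Ω → ℝ, Integrable h μ →
      (∀ᵐ ω ∂μ, sensitivityWeight Γ⁻¹ e ≤ h ω ∧ h ω ≤ sensitivityWeight Γ e) →
      (∫ ω, h ω ∂μ) = 1 →
      (∫ ω, Y ω * w ω ∂μ) ≤ ∫ ω, Y ω * h ω ∂μ := by
  subst hw
  have h_one := bathtubWeight.integral_sensitivityWeight_eq_one hY.aemeasurable hΓ hq e
  exact ⟨h_one, bathtubWeight.integral_mul hY.aemeasurable hY _ _ _,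
    fun h hh h_mem h_mass => bathtubWeight.integral_mul_le hY
      (bathtubWeight.integrable hY.aemeasurable _ _ _) hh h_mem (h_mass.trans h_one.symm)⟩

/-- Quantile-balancing solution: sharp lower bound of the linear program with the
moment constraint.  `Q'` is the `1/(1+Γ)`-quantile of `μ`, `hstar = W₊` below `Q'`
and `W₋` above `Q'`; it integrates to one and minimizes `∫ y h(y) dμ` among mean-one
weights `h` with `W₋ ≤ h ≤ W₊` a.e. -/
theorem stmt_3 (μ : Measure ℝ) [IsProbabilityMeasure μ] (p : ℝ → ℝ)
    (hp_cont : Continuous p) (hp_pos : ∀ x, 0 < p x)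
    (hμ : μ = MeasureTheory.volume.withDensity fun x => ENNReal.ofReal (p x))
    (hmom : Integrable (fun y => y ^ 2) μ)
    (Γ e : ℝ) (hΓ : 1 < Γ) (he : e ∈ Set.Ioo (0 : ℝ) 1)
    (Q' : ℝ) (hQ' : (μ (Set.Iic Q')).toReal = 1 / (1 + Γ))
    (hstar : ℝ → ℝ)
    (hhstar : ∀ y, hstar y = if y ≤ Q' then (1 - Γ) * e + Γ else (1 - Γ⁻¹) * e + Γ⁻¹) :
    (∫ y, hstar y ∂μ) = 1 ∧
    (∫ y, y * hstar y ∂μ) =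
      ((1 - Γ) * e + Γ) * (∫ y in Set.Iic Q', y ∂μ) +
        ((1 - Γ⁻¹) * e + Γ⁻¹) * (∫ y in Set.Ioi Q', y ∂μ) ∧
    ∀ h : ℝ → ℝ, Measurable h →
      (∀ᵐ y ∂μ, (1 - Γ⁻¹) * e + Γ⁻¹ ≤ h y ∧ h y ≤ (1 - Γ) * e + Γ) →
      (∫ y, h y ∂μ) = 1 →
      (∫ y, y * hstar y ∂μ) ≤ ∫ y, y * h y ∂μ := by
  have h_id : Integrable id μ :=
    ((memLp_two_iff_integrable_sq aestronglyMeasurable_id).2 hmom).integrable one_le_two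
  obtain ⟨h_one, h_value, h_min⟩ :=
    stmt_3_general h_id (zero_lt_one.trans hΓ) e hQ' (funext hhstar)
  exact ⟨h_one, h_value, fun h _ h_mem h_mass =>
    h_min h (integrable_of_integral_eq_one h_mass) h_mem h_mass⟩
end

section
/- Fix θ > 0 and define f_θ(ξ) := E[(ξ−Y)·Y·1{Y≤ξ}] / E[(ξ−Y)·1{Y≤ξ}] − (E[Y] − θ) for ξ ∈ ℝ (the denominator E[(ξ−Y)·1{Y≤ξ}] is strictly positive for every ξ because the density of μ is strictly positive). Then f_θ is strictly increasing on ℝ and has exactly one root ξ*, and moreover ξ* > E[Y] − θ. -/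
open MeasureTheory

/-!
Write `N ξ / D ξ` for the quotient, with `N ξ = E[(ξ - Y)⁺ Y]` and `D ξ = E[(ξ - Y)⁺]`: it is the
mean of `Y` under the weight `(ξ - Y)⁺`. It is less than `ξ` because the weight lives below `ξ`, and
it is continuous because `(ξ - Y)⁺` is 1-Lipschitz in `ξ`. Dividing the weights by `ξ` shows that it
tends to `E[Y]` as `ξ → ∞`.

For `t < a < b` the ratio of weights `(b - y)⁺ / (a - y)⁺` increases in `y < a` and equals
`(b - t) / (a - t)` at `y = t`, so that `(a - t) (b - y)⁺ - (b - t) (a - y)⁺` has the sign of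
`y - t`. Taking for `t` the mean `N a / D a` gives `N b - t D b > 0`, that is, `t < N b / D b`.

A level `t < E[Y]` is then attained by the intermediate value theorem, and a point `ξ` where it is
attained satisfies `t = N ξ / D ξ < ξ`.
-/

lemma integral_pos_of_pos_on {α : Type*} [MeasurableSpace α] {ν : Measure α} {f : α → ℝ}
    {s : Set α} (hs : 0 < ν s) (hf : Integrable f ν) (hf_nonneg : 0 ≤ f)
    (hf_pos : ∀ x ∈ s, 0 < f x) : 0 < ∫ x, f x ∂ν :=
  (integral_pos_iff_support_of_nonneg hf_nonneg hf).2
    (hs.trans_le (measure_mono fun x hx => (hf_pos x hx).ne'))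

lemma integrable_negPart {α : Type*} [MeasurableSpace α] {ν : Measure α} {f : α → ℝ}
    (hf : Integrable f ν) : Integrable (fun x => (f x)⁻) ν :=
  hf.neg_part

section ShortfallWeight

open Filter Topology

variable {μ : Measure ℝ} {g : ℝ → ℝ}

lemma posPart_sub_le_abs_add_negPart (ξ y : ℝ) : (ξ - y)⁺ ≤ |ξ| + y⁻ :=
  max_le (by linarith [le_abs_self ξ, neg_le_negPart y])
    (add_nonneg (abs_nonneg ξ) (negPart_nonneg y))

lemma setIntegral_Iic_sub_mul (μ : Measure ℝ) (g : ℝ → ℝ) (ξ : ℝ) :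
    ∫ y in Set.Iic ξ, (ξ - y) * g y ∂μ = ∫ y, (ξ - y)⁺ * g y ∂μ := by
  rw [← integral_indicator measurableSet_Iic]
  congr 1 with y
  by_cases hy : y ≤ ξ
  · simp [hy]
  · simp [hy, posPart_eq_zero.2 (sub_nonpos.2 (not_le.1 hy).le)]

lemma aestronglyMeasurable_posPart_sub_mul (hg : AEStronglyMeasurable g μ) (ξ : ℝ) :
    AEStronglyMeasurable (fun y => (ξ - y)⁺ * g y) μ :=
  (continuous_posPart.comp (continuous_const.sub continuous_id)).aestronglyMeasurable.mul hg

lemma integrable_posPart_sub_mul (hg : Integrable g μ)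
    (hg' : Integrable (fun y => y⁻ * g y) μ) (ξ : ℝ) :
    Integrable (fun y => (ξ - y)⁺ * g y) μ := by
  refine ((hg.norm.const_mul |ξ|).add hg'.norm).mono'
    (aestronglyMeasurable_posPart_sub_mul hg.aestronglyMeasurable ξ) (ae_of_all _ fun y => ?_)
  calc ‖(ξ - y)⁺ * g y‖ = (ξ - y)⁺ * ‖g y‖ := by
        rw [norm_mul, Real.norm_of_nonneg (posPart_nonneg _)]
    _ ≤ (|ξ| + y⁻) * ‖g y‖ := by gcongr; exact posPart_sub_le_abs_add_negPart ξ y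
    _ = |ξ| * ‖g y‖ + ‖y⁻ * g y‖ := by
        rw [norm_mul, Real.norm_of_nonneg (negPart_nonneg y), add_mul]

lemma continuous_integral_posPart_sub_mul (hg : Integrable g μ)
    (hg' : Integrable (fun y => y⁻ * g y) μ) :
    Continuous fun ξ => ∫ y, (ξ - y)⁺ * g y ∂μ := by
  refine (LipschitzWith.of_dist_le' (K := ∫ y, ‖g y‖ ∂μ) fun a b => ?_).continuous
  rw [dist_eq_norm, ← integral_sub (integrable_posPart_sub_mul hg hg' a)
    (integrable_posPart_sub_mul hg hg' b), mul_comm, ← integral_const_mul]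
  refine norm_integral_le_of_norm_le (hg.norm.const_mul _) (ae_of_all _ fun y => ?_)
  rw [← sub_mul, norm_mul]
  gcongr
  calc ‖(a - y)⁺ - (b - y)⁺‖ ≤ |(a - y) - (b - y)| := abs_max_sub_max_le_abs _ _ 0
    _ = dist a b := by rw [sub_sub_sub_cancel_right, Real.dist_eq]

lemma tendsto_inv_mul_posPart_sub_atTop (y : ℝ) :
    Tendsto (fun ξ : ℝ => ξ⁻¹ * (ξ - y)⁺) atTop (𝓝 1) := by
  have h : Tendsto (fun ξ : ℝ => 1 - ξ⁻¹ * y) atTop (𝓝 1) := by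
    simpa using tendsto_const_nhds.sub (tendsto_inv_atTop_zero.mul_const y)
  refine h.congr' ?_
  filter_upwards [eventually_gt_atTop 0, eventually_ge_atTop y] with ξ hξ hy
  rw [posPart_eq_self.2 (sub_nonneg.2 hy)]
  field_simp

lemma inv_mul_posPart_sub_le {ξ : ℝ} (hξ : 1 ≤ ξ) (y : ℝ) : ξ⁻¹ * (ξ - y)⁺ ≤ 1 + y⁻ := by
  have hξ0 : 0 < ξ := by linarith
  rw [inv_mul_le_iff₀ hξ0]
  calc (ξ - y)⁺ ≤ ξ + y⁻ := by
        simpa only [abs_of_pos hξ0] using posPart_sub_le_abs_add_negPart ξ y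
    _ ≤ ξ * (1 + y⁻) := by nlinarith [negPart_nonneg y]

lemma tendsto_inv_mul_integral_posPart_sub_mul_atTop (hg : Integrable g μ)
    (hg' : Integrable (fun y => y⁻ * g y) μ) :
    Tendsto (fun ξ => ξ⁻¹ * ∫ y, (ξ - y)⁺ * g y ∂μ) atTop (𝓝 (∫ y, g y ∂μ)) := by
  simp only [← integral_const_mul]
  refine tendsto_integral_filter_of_dominated_convergence (fun y => ‖g y‖ + ‖y⁻ * g y‖)
    (.of_forall fun ξ =>
      (aestronglyMeasurable_posPart_sub_mul hg.aestronglyMeasurable ξ).const_mul _)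
    ?_ (hg.norm.add hg'.norm) (ae_of_all _ fun y => ?_)
  · filter_upwards [eventually_ge_atTop 1] with ξ hξ
    refine ae_of_all _ fun y => ?_
    have hweight : 0 ≤ ξ⁻¹ * (ξ - y)⁺ :=
      mul_nonneg (inv_nonneg.2 (by linarith)) (posPart_nonneg _)
    calc ‖ξ⁻¹ * ((ξ - y)⁺ * g y)‖ = ξ⁻¹ * (ξ - y)⁺ * ‖g y‖ := by
          rw [← mul_assoc, norm_mul, Real.norm_of_nonneg hweight]
      _ ≤ (1 + y⁻) * ‖g y‖ := by gcongr; exact inv_mul_posPart_sub_le hξ y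
      _ = ‖g y‖ + ‖y⁻ * g y‖ := by
          rw [norm_mul, Real.norm_of_nonneg (negPart_nonneg y), add_mul, one_mul]
  · simpa only [one_mul, mul_assoc] using
      (tendsto_inv_mul_posPart_sub_atTop y).mul_const (g y)

end ShortfallWeight

section ShortfallMean

open Filter Topology

variable {μ : Measure ℝ}

/-- The mean of `Y` under the weight `(ξ - Y)⁺`, where `Y` has law `μ`. It is `0` by convention
when the total weight `E[(ξ - Y)⁺]` vanishes. -/
noncomputable def shortfallMean (μ : Measure ℝ) (ξ : ℝ) : ℝ :=
  (∫ y in Set.Iic ξ, (ξ - y) * y ∂μ) / ∫ y in Set.Iic ξ, (ξ - y) ∂μ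

lemma setIntegral_Iic_sub (μ : Measure ℝ) (ξ : ℝ) :
    ∫ y in Set.Iic ξ, (ξ - y) ∂μ = ∫ y, (ξ - y)⁺ ∂μ := by
  simpa only [mul_one] using setIntegral_Iic_sub_mul μ (fun _ => 1) ξ

lemma shortfallMean_eq_div (μ : Measure ℝ) (ξ : ℝ) :
    shortfallMean μ ξ = (∫ y, (ξ - y)⁺ * y ∂μ) / ∫ y, (ξ - y)⁺ ∂μ := by
  rw [shortfallMean, setIntegral_Iic_sub, setIntegral_Iic_sub_mul μ (fun y => y)]

lemma integrable_negPart_mul_self (hY₂ : Integrable (fun y : ℝ => y⁻ ^ 2) μ) :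
    Integrable (fun y : ℝ => y⁻ * y) μ := by
  refine hY₂.neg.congr (ae_of_all _ fun y => ?_)
  rcases le_total 0 y with hy | hy
  · simp [negPart_eq_zero.2 hy]
  · simp [negPart_eq_neg.2 hy, sq]

variable [IsFiniteMeasure μ]

lemma integrable_posPart_sub (hY : Integrable (fun y : ℝ => y) μ) (ξ : ℝ) :
    Integrable (fun y => (ξ - y)⁺) μ :=
  ((integrable_const ξ).sub hY).pos_part

lemma integral_posPart_sub_pos {ξ : ℝ} (hξ : 0 < μ (Set.Iio ξ))
    (hY : Integrable (fun y : ℝ => y) μ) : 0 < ∫ y, (ξ - y)⁺ ∂μ :=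
  integral_pos_of_pos_on hξ (integrable_posPart_sub hY ξ) (fun _ => posPart_nonneg _)
    fun _ hy => posPart_pos (sub_pos.2 hy)

lemma integrable_posPart_sub_mul_sub (hY : Integrable (fun y : ℝ => y) μ)
    (hY₂ : Integrable (fun y : ℝ => y⁻ ^ 2) μ) (ξ t : ℝ) :
    Integrable (fun y => (ξ - y)⁺ * (y - t)) μ := by
  simp only [mul_sub]
  exact (integrable_posPart_sub_mul hY (integrable_negPart_mul_self hY₂) ξ).sub
    ((integrable_posPart_sub hY ξ).mul_const t)

lemma integral_posPart_sub_mul_sub {ξ : ℝ} (hξ : 0 < μ (Set.Iio ξ))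
    (hY : Integrable (fun y : ℝ => y) μ) (hY₂ : Integrable (fun y : ℝ => y⁻ ^ 2) μ) (t : ℝ) :
    ∫ y, (ξ - y)⁺ * (y - t) ∂μ = (shortfallMean μ ξ - t) * ∫ y, (ξ - y)⁺ ∂μ := by
  simp only [mul_sub]
  rw [integral_sub (integrable_posPart_sub_mul hY (integrable_negPart_mul_self hY₂) ξ)
    ((integrable_posPart_sub hY ξ).mul_const t), integral_mul_const, sub_mul,
    shortfallMean_eq_div, div_mul_cancel₀ _ (integral_posPart_sub_pos hξ hY).ne',
    mul_comm t]

lemma lt_shortfallMean_iff {ξ t : ℝ} (hξ : 0 < μ (Set.Iio ξ))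
    (hY : Integrable (fun y : ℝ => y) μ) (hY₂ : Integrable (fun y : ℝ => y⁻ ^ 2) μ) :
    t < shortfallMean μ ξ ↔ 0 < ∫ y, (ξ - y)⁺ * (y - t) ∂μ := by
  rw [integral_posPart_sub_mul_sub hξ hY hY₂,
    mul_pos_iff_of_pos_right (integral_posPart_sub_pos hξ hY), sub_pos]

lemma shortfallMean_lt {ξ : ℝ} (hξ : 0 < μ (Set.Iio ξ)) (hY : Integrable (fun y : ℝ => y) μ)
    (hY₂ : Integrable (fun y : ℝ => y⁻ ^ 2) μ) : shortfallMean μ ξ < ξ := by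
  have hint : 0 < ∫ y, -((ξ - y)⁺ * (y - ξ)) ∂μ := by
    refine integral_pos_of_pos_on hξ (integrable_posPart_sub_mul_sub hY hY₂ ξ ξ).neg
      (fun y => ?_) fun y hy => ?_
    · rcases le_total y ξ with h | h
      · simpa using mul_nonpos_of_nonneg_of_nonpos (posPart_nonneg (ξ - y)) (sub_nonpos.2 h)
      · simp [posPart_eq_zero.2 (sub_nonpos.2 h)]
    · simpa using mul_neg_of_pos_of_neg (posPart_pos (sub_pos.2 hy)) (sub_neg.2 hy)
  rw [integral_neg, integral_posPart_sub_mul_sub hξ hY hY₂, ← neg_mul,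
    mul_pos_iff_of_pos_right (integral_posPart_sub_pos hξ hY)] at hint
  linarith

lemma posPart_sub_mul_sub_posPart_sub_mul_of_le {a b y : ℝ} (hab : a ≤ b) (hy : y ≤ a) (t : ℝ) :
    (a - t) * ((b - y)⁺ * (y - t)) - (b - t) * ((a - y)⁺ * (y - t)) =
      (b - a) * (y - t) ^ 2 := by
  rw [posPart_eq_self.2 (sub_nonneg.2 hy), posPart_eq_self.2 (sub_nonneg.2 (hy.trans hab))]
  ring

lemma mul_integral_posPart_sub_mul_sub_lt {a b t : ℝ} (ht : 0 < μ (Set.Iio t)) (hta : t ≤ a)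
    (hab : a < b) (hY : Integrable (fun y : ℝ => y) μ)
    (hY₂ : Integrable (fun y : ℝ => y⁻ ^ 2) μ) :
    (b - t) * ∫ y, (a - y)⁺ * (y - t) ∂μ < (a - t) * ∫ y, (b - y)⁺ * (y - t) ∂μ := by
  have ha := (integrable_posPart_sub_mul_sub hY hY₂ a t).const_mul (b - t)
  have hb := (integrable_posPart_sub_mul_sub hY hY₂ b t).const_mul (a - t)
  rw [← sub_pos, ← integral_const_mul, ← integral_const_mul, ← integral_sub hb ha]
  refine integral_pos_of_pos_on ht (hb.sub ha) (fun y => ?_) fun y hy => ?_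
  · rcases le_total y a with hya | hya
    · simp only [Pi.zero_apply, posPart_sub_mul_sub_posPart_sub_mul_of_le hab.le hya]
      exact mul_nonneg (sub_nonneg.2 hab.le) (sq_nonneg _)
    · simp only [Pi.zero_apply, posPart_eq_zero.2 (sub_nonpos.2 hya), zero_mul, mul_zero, sub_zero]
      exact mul_nonneg (sub_nonneg.2 hta)
        (mul_nonneg (posPart_nonneg _) (sub_nonneg.2 (hta.trans hya)))
  · have hyt : y < t := hy
    rw [posPart_sub_mul_sub_posPart_sub_mul_of_le hab.le (hyt.le.trans hta)]
    exact mul_pos (sub_pos.2 hab) (sq_pos_of_neg (sub_neg.2 hyt))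

lemma strictMono_shortfallMean (hμ : ∀ x, 0 < μ (Set.Iio x))
    (hY : Integrable (fun y : ℝ => y) μ) (hY₂ : Integrable (fun y : ℝ => y⁻ ^ 2) μ) :
    StrictMono (shortfallMean μ) := by
  intro a b hab
  have hma : shortfallMean μ a < a := shortfallMean_lt (hμ a) hY hY₂
  have hlt := mul_integral_posPart_sub_mul_sub_lt (hμ (shortfallMean μ a)) hma.le hab hY hY₂
  rw [integral_posPart_sub_mul_sub (hμ a) hY hY₂, sub_self, zero_mul, mul_zero,
    mul_pos_iff_of_pos_left (sub_pos.2 hma)] at hlt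
  exact (lt_shortfallMean_iff (hμ b) hY hY₂).2 hlt

lemma continuous_shortfallMean (hμ : ∀ x, 0 < μ (Set.Iio x))
    (hY : Integrable (fun y : ℝ => y) μ) (hY₂ : Integrable (fun y : ℝ => y⁻ ^ 2) μ) :
    Continuous (shortfallMean μ) := by
  have hD : Continuous fun ξ => ∫ y, (ξ - y)⁺ ∂μ := by
    simpa only [mul_one] using continuous_integral_posPart_sub_mul (integrable_const (1 : ℝ))
      ((integrable_negPart hY).mul_const 1)
  rw [funext (shortfallMean_eq_div μ)]
  exact (continuous_integral_posPart_sub_mul hY (integrable_negPart_mul_self hY₂)).div hD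
    fun ξ => (integral_posPart_sub_pos (hμ ξ) hY).ne'

lemma tendsto_shortfallMean_atTop [NeZero μ] (hY : Integrable (fun y : ℝ => y) μ)
    (hY₂ : Integrable (fun y : ℝ => y⁻ ^ 2) μ) :
    Tendsto (shortfallMean μ) atTop (𝓝 (⨍ y, y ∂μ)) := by
  have hN := tendsto_inv_mul_integral_posPart_sub_mul_atTop hY (integrable_negPart_mul_self hY₂)
  have hD : Tendsto (fun ξ => ξ⁻¹ * ∫ y, (ξ - y)⁺ ∂μ) atTop (𝓝 (μ.real Set.univ)) := by
    simpa using tendsto_inv_mul_integral_posPart_sub_mul_atTop (integrable_const (1 : ℝ))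
      ((integrable_negPart hY).mul_const 1)
  rw [average_eq, smul_eq_mul, ← div_eq_inv_mul]
  refine (hN.div hD measureReal_univ_ne_zero).congr' ?_
  filter_upwards [eventually_ne_atTop 0] with ξ hξ
  rw [shortfallMean_eq_div, Pi.div_apply, mul_div_mul_left _ _ (inv_ne_zero hξ)]

lemma exists_shortfallMean_eq (hμ : ∀ x, 0 < μ (Set.Iio x))
    (hY : Integrable (fun y : ℝ => y) μ) (hY₂ : Integrable (fun y : ℝ => y⁻ ^ 2) μ) {t : ℝ}
    (ht : t < ⨍ y, y ∂μ) : ∃ ξ, shortfallMean μ ξ = t := by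
  have : NeZero μ := ⟨fun h => by simpa [h] using hμ 0⟩
  exact mem_range_of_exists_le_of_exists_ge (continuous_shortfallMean hμ hY hY₂)
    ⟨t, (shortfallMean_lt (hμ t) hY hY₂).le⟩
    (((tendsto_shortfallMean_atTop hY hY₂).eventually_const_le ht).exists)

end ShortfallMean

lemma isOpenPosMeasure_withDensity_ofReal {α : Type*} [TopologicalSpace α] [MeasurableSpace α]
    {ν : Measure α} [ν.IsOpenPosMeasure] {p : α → ℝ} (hp : AEMeasurable p ν)
    (hp_pos : ∀ x, 0 < p x) :
    (ν.withDensity fun x => ENNReal.ofReal (p x)).IsOpenPosMeasure :=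
  (withDensity_absolutelyContinuous' hp.ennreal_ofReal
    (ae_of_all _ fun x => (ENNReal.ofReal_pos.2 (hp_pos x)).ne')).isOpenPosMeasure

theorem stmt_4_general (μ : Measure ℝ) [IsProbabilityMeasure μ] (hμ : ∀ x, 0 < μ (Set.Iio x))
    (hY : Integrable (fun y : ℝ => y) μ) (hY₂ : Integrable (fun y : ℝ => y⁻ ^ 2) μ)
    (θ : ℝ) (hθ : 0 < θ) :
    (∀ ξ : ℝ, 0 < ∫ y in Set.Iic ξ, (ξ - y) ∂μ) ∧
    StrictMono (fun ξ : ℝ => shortfallMean μ ξ - ((∫ y, y ∂μ) - θ)) ∧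
    ∃ ξstar : ℝ,
      shortfallMean μ ξstar - ((∫ y, y ∂μ) - θ) = 0 ∧
      (∫ y, y ∂μ) - θ < ξstar ∧
      ∀ ξ' : ℝ, shortfallMean μ ξ' - ((∫ y, y ∂μ) - θ) = 0 → ξ' = ξstar := by
  have hmono : StrictMono fun ξ => shortfallMean μ ξ - ((∫ y, y ∂μ) - θ) :=
    fun a b hab => sub_lt_sub_right (strictMono_shortfallMean hμ hY hY₂ hab) _
  obtain ⟨ξ, hξ⟩ : ∃ ξ, shortfallMean μ ξ = (∫ y, y ∂μ) - θ :=
    exists_shortfallMean_eq hμ hY hY₂ (by rw [average_eq_integral]; linarith)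
  have hroot : shortfallMean μ ξ - ((∫ y, y ∂μ) - θ) = 0 := sub_eq_zero.2 hξ
  exact ⟨fun ξ => setIntegral_Iic_sub μ ξ ▸ integral_posPart_sub_pos (hμ ξ) hY, hmono, ξ, hroot,
    hξ ▸ shortfallMean_lt (hμ ξ) hY hY₂, fun ξ' h => hmono.injective (h.trans hroot.symm)⟩

/-- For `θ > 0`, the function
`f_θ(ξ) = E[(ξ-Y) Y 1{Y≤ξ}] / E[(ξ-Y) 1{Y≤ξ}] - (E[Y] - θ)`
(whose denominator is strictly positive for every `ξ`) is strictly increasing on `ℝ`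
and has exactly one root `ξ*`, which moreover satisfies `ξ* > E[Y] - θ`. -/
theorem stmt_4 (μ : Measure ℝ) [IsProbabilityMeasure μ] (p : ℝ → ℝ)
    (hp_cont : Continuous p) (hp_pos : ∀ x, 0 < p x)
    (hμ : μ = MeasureTheory.volume.withDensity fun x => ENNReal.ofReal (p x))
    (hmom : Integrable (fun y => y ^ 2) μ)
    (θ : ℝ) (hθ : 0 < θ) :
    (∀ ξ : ℝ, 0 < ∫ y in Set.Iic ξ, (ξ - y) ∂μ) ∧
    StrictMono (fun ξ : ℝ =>
      (∫ y in Set.Iic ξ, (ξ - y) * y ∂μ) / (∫ y in Set.Iic ξ, (ξ - y) ∂μ) -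
        ((∫ y, y ∂μ) - θ)) ∧
    ∃ ξstar : ℝ,
      ((∫ y in Set.Iic ξstar, (ξstar - y) * y ∂μ) / (∫ y in Set.Iic ξstar, (ξstar - y) ∂μ) -
          ((∫ y, y ∂μ) - θ) = 0) ∧
      (∫ y, y ∂μ) - θ < ξstar ∧
      ∀ ξ' : ℝ,
        ((∫ y in Set.Iic ξ', (ξ' - y) * y ∂μ) / (∫ y in Set.Iic ξ', (ξ' - y) ∂μ) -
            ((∫ y, y ∂μ) - θ) = 0) → ξ' = ξstar := by
  have hId : MemLp (fun y : ℝ => y) 2 μ := (memLp_two_iff_integrable_sq (by fun_prop)).2 hmom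
  have : μ.IsOpenPosMeasure :=
    hμ ▸ isOpenPosMeasure_withDensity_ofReal hp_cont.measurable.aemeasurable hp_pos
  exact stmt_4_general μ (fun x => isOpen_Iio.measure_pos μ Set.nonempty_Iio)
    (hId.integrable one_le_two) hId.neg_part.integrable_sq θ hθ
end

section
/- Define r(ξ) := E[(ξ−Y)·Y·1{Y≤ξ}] / E[(ξ−Y)·1{Y≤ξ}] for ξ ∈ ℝ. Then r is differentiable on ℝ with derivative r'(ξ) = V(ξ) / M(ξ)², where, writing E[g(Y) ∣ Y≤ξ] := E[g(Y)·1{Y≤ξ}]/F(ξ) (well defined since F(ξ) > 0), M(ξ) := E[ξ−Y ∣ Y≤ξ] and V(ξ) := E[Y² ∣ Y≤ξ] − (E[Y ∣ Y≤ξ])² is the conditional variance of Y given Y ≤ ξ; in particular r'(ξ) > 0 for every ξ. -/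
open MeasureTheory

/-!
The partial moments `t ↦ E[(t - Y) g(Y) 1{Y ≤ t}]` integrate the function `t ↦ (t - Y)⁺ g(Y)`,
which is Lipschitz with constant `|g(Y)|` and has derivative `g(Y) 1{Y ≤ t}` away from `t = Y`.
Dominated convergence therefore differentiates them wherever the law of `Y` has no atom. With
`F, B, C` the integrals of `1, y, y²` over `Iic ξ`, the numerator `ξ B - C` and the denominator
`ξ F - B` of the ratio have derivatives `B` and `F`, so the quotient rule gives
`(C F - B²) / (ξ F - B)²`. Positivity holds because a variable without atoms is not almost surely
constant.
-/

open Set ProbabilityTheory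

section HasDerivAt

variable {E : Type*} [NormedAddCommGroup E] [NormedSpace ℝ E]

theorem indicator_Iic_sub_smul (g : ℝ → E) (t : ℝ) :
    (Iic t).indicator (fun y => (t - y) • g y) = fun y => max (t - y) 0 • g y := by
  ext y
  rcases le_or_gt y t with hy | hy
  · rw [indicator_of_mem (mem_Iic.2 hy), max_eq_left (sub_nonneg.2 hy)]
  · rw [indicator_of_notMem (notMem_Iic.2 hy), max_eq_right (sub_neg.2 hy).le, zero_smul]

theorem hasDerivAt_max_sub_zero_smul {y ξ : ℝ} (hy : y ≠ ξ) (v : E) :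
    HasDerivAt (fun t => max (t - y) 0 • v) ((Iic ξ).indicator (fun _ => v) y) ξ := by
  rcases hy.lt_or_gt with hlt | hgt
  · have hlin : HasDerivAt (fun t => (t - y) • v) v ξ := by
      simpa only [one_smul, id_eq] using ((hasDerivAt_id ξ).sub_const y).smul_const v
    rw [indicator_of_mem (mem_Iic.2 hlt.le)]
    refine hlin.congr_of_eventuallyEq ?_
    filter_upwards [Ioi_mem_nhds hlt] with t ht
    rw [max_eq_left (sub_pos.2 ht).le]
  · rw [indicator_of_notMem (notMem_Iic.2 hgt)]
    refine (hasDerivAt_const ξ (0 : E)).congr_of_eventuallyEq ?_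
    filter_upwards [Iio_mem_nhds hgt] with t ht
    rw [max_eq_right (sub_neg.2 ht).le, zero_smul]

theorem lipschitzWith_max_sub_zero_smul (y : ℝ) (v : E) :
    LipschitzWith ‖v‖₊ fun t : ℝ => max (t - y) 0 • v := by
  have hmax : LipschitzWith 1 fun t : ℝ => max (t - y) 0 :=
    (IsometryEquiv.subRight y).isometry.lipschitz.max_const 0
  refine LipschitzWith.of_dist_le_mul fun s t => ?_
  rw [dist_eq_norm, ← sub_smul, norm_smul, mul_comm, coe_nnnorm, ← dist_eq_norm]
  gcongr
  simpa only [NNReal.coe_one, one_mul] using hmax.dist_le_mul s t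

theorem hasDerivAt_setIntegral_Iic_sub_smul {μ : Measure ℝ} {g : ℝ → E} (hg : Integrable g μ)
    (hyg : Integrable (fun y => y • g y) μ) {ξ : ℝ} (hξ : μ {ξ} = 0) :
    HasDerivAt (fun t => ∫ y in Iic t, (t - y) • g y ∂μ) (∫ y in Iic ξ, g y ∂μ) ξ := by
  have hint (t : ℝ) : Integrable (fun y => max (t - y) 0 • g y) μ := by
    rw [← indicator_Iic_sub_smul]
    simp_rw [sub_smul]
    exact ((hg.smul t).sub hyg).indicator measurableSet_Iic
  have hne : ∀ᵐ y ∂μ, y ≠ ξ := by simpa [ae_iff] using hξ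
  have hlip (y : ℝ) :
      LipschitzOnWith (Real.nnabs ‖g y‖) (fun t => max (t - y) 0 • g y) univ := by
    rw [Real.nnabs_of_nonneg (norm_nonneg _), norm_toNNReal]
    exact (lipschitzWith_max_sub_zero_smul y (g y)).lipschitzOnWith
  have hderiv := (hasDerivAt_integral_of_dominated_loc_of_lip Filter.univ_mem
    (.of_forall fun t => (hint t).aestronglyMeasurable) (hint ξ)
    (hg.indicator measurableSet_Iic).aestronglyMeasurable (.of_forall hlip) hg.norm
    (hne.mono fun y hy => hasDerivAt_max_sub_zero_smul hy (g y))).2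
  simpa only [← indicator_Iic_sub_smul, integral_indicator measurableSet_Iic] using hderiv

end HasDerivAt

theorem setIntegral_Iic_sub_pos {μ : Measure ℝ} {ξ : ℝ}
    (hint : IntegrableOn (fun y => ξ - y) (Iic ξ) μ) (hξ : μ (Iio ξ) ≠ 0) :
    0 < ∫ y in Iic ξ, (ξ - y) ∂μ := by
  have hnonneg : 0 ≤ᵐ[μ.restrict (Iic ξ)] fun y => ξ - y := by
    filter_upwards [ae_restrict_mem measurableSet_Iic] with y hy using sub_nonneg.2 hy
  rw [setIntegral_pos_iff_support_of_nonneg_ae hnonneg hint]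
  exact (pos_iff_ne_zero.2 hξ).trans_le
    (measure_mono fun y hy => ⟨(sub_pos.2 hy).ne', (mem_Iio.1 hy).le⟩)

theorem variance_id_pos {μ : Measure ℝ} [IsFiniteMeasure μ] [NeZero μ] [NullSingletonClass μ]
    (hμ : MemLp id 2 μ) : 0 < Var[id; μ] := by
  refine (variance_nonneg id μ).lt_of_ne' fun hzero => ?_
  have hconst : ∀ᵐ y ∂μ, y = μ[id] := ae_eq_integral_of_variance_eq_zero hμ hzero
  obtain ⟨y, hy, hy'⟩ := (hconst.and (μ.ae_ne μ[id])).exists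
  exact hy' hy

theorem memLp_cond {Ω E : Type*} [MeasurableSpace Ω] [NormedAddCommGroup E]
    {μ : Measure Ω} {X : Ω → E} {q : ENNReal} (hX : MemLp X q μ) {s : Set Ω}
    (hs : μ s ≠ 0) : MemLp X q μ[|s] :=
  (hX.restrict s).smul_measure (ENNReal.inv_ne_top.2 hs)

theorem variance_cond_eq_sub {Ω : Type*} [MeasurableSpace Ω] {μ : Measure Ω} [IsFiniteMeasure μ]
    {X : Ω → ℝ} (hX : MemLp X 2 μ) {s : Set Ω} (hs : μ s ≠ 0) :
    Var[X; μ[|s]] =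
      (∫ ω in s, X ω ^ 2 ∂μ) / μ.real s - ((∫ ω in s, X ω ∂μ) / μ.real s) ^ 2 := by
  have := cond_isProbabilityMeasure hs
  have hmean (f : Ω → ℝ) : ∫ ω, f ω ∂μ[|s] = (∫ ω in s, f ω ∂μ) / μ.real s := by
    rw [ProbabilityTheory.cond, ← setAverage_eq', setAverage_eq, smul_eq_mul, inv_mul_eq_div]
  rw [variance_eq_sub (memLp_cond hX hs), hmean, hmean]
  rfl

theorem variance_id_cond_pos {μ : Measure ℝ} [IsFiniteMeasure μ] [NullSingletonClass μ]
    (hμ : MemLp id 2 μ) {s : Set ℝ} (hs : μ s ≠ 0) : 0 < Var[id; μ[|s]] := by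
  have := cond_isProbabilityMeasure hs
  have : NullSingletonClass μ[|s] := ⟨fun y => cond_absolutelyContinuous (measure_singleton y)⟩
  exact variance_id_pos (memLp_cond hμ hs)

theorem hasDerivAt_setIntegral_Iic_ratio {μ : Measure ℝ} [IsFiniteMeasure μ]
    (hμ : MemLp id 2 μ) {ξ : ℝ} (hatom : μ {ξ} = 0)
    (hden_ne : ∫ y in Iic ξ, (ξ - y) ∂μ ≠ 0) :
    HasDerivAt (fun t => (∫ y in Iic t, (t - y) * y ∂μ) / ∫ y in Iic t, (t - y) ∂μ)
      (Var[id; μ[|Iic ξ]] / ((∫ y in Iic ξ, (ξ - y) ∂μ) / μ.real (Iic ξ)) ^ 2) ξ := by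
  have hid : Integrable (fun y => y) μ := hμ.integrable one_le_two
  have hsq : Integrable (fun y => y ^ 2) μ := hμ.integrable_sq
  have hnum_deriv : HasDerivAt (fun t => ∫ y in Iic t, (t - y) * y ∂μ) (∫ y in Iic ξ, y ∂μ) ξ :=
    hasDerivAt_setIntegral_Iic_sub_smul hid (by simpa only [smul_eq_mul, sq] using hsq) hatom
  have hden_deriv : HasDerivAt (fun t => ∫ y in Iic t, (t - y) ∂μ) (μ.real (Iic ξ)) ξ := by
    simpa using hasDerivAt_setIntegral_Iic_sub_smul (integrable_const (1 : ℝ)) (by simpa) hatom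
  have hnum : ∫ y in Iic ξ, (ξ - y) * y ∂μ =
      ξ * ∫ y in Iic ξ, y ∂μ - ∫ y in Iic ξ, y ^ 2 ∂μ := by
    simp_rw [sub_mul, ← sq]
    rw [integral_sub (hid.const_mul ξ).integrableOn hsq.integrableOn, integral_const_mul]
  have hden : ∫ y in Iic ξ, (ξ - y) ∂μ = ξ * μ.real (Iic ξ) - ∫ y in Iic ξ, y ∂μ := by
    rw [integral_sub (integrable_const ξ) hid.integrableOn]
    simp [mul_comm]
  have hξ : μ (Iic ξ) ≠ 0 := fun hzero => hden_ne (setIntegral_measure_zero _ hzero)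
  have hF : μ.real (Iic ξ) ≠ 0 := by rwa [measureReal_ne_zero_iff]
  refine (hnum_deriv.div hden_deriv hden_ne).congr_deriv ?_
  rw [variance_cond_eq_sub hμ hξ, hnum]
  simp only [id_eq]
  rw [hden] at hden_ne ⊢
  field_simp
  ring

theorem stmt_5_general {μ : Measure ℝ} [IsFiniteMeasure μ] [NullSingletonClass μ]
    (hmom : Integrable (fun y => y ^ 2) μ) {ξ : ℝ} (hξ : μ (Iic ξ) ≠ 0) :
    HasDerivAt (fun t => (∫ y in Iic t, (t - y) * y ∂μ) / ∫ y in Iic t, (t - y) ∂μ)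
        (((∫ y in Iic ξ, y ^ 2 ∂μ) / μ.real (Iic ξ) -
            ((∫ y in Iic ξ, y ∂μ) / μ.real (Iic ξ)) ^ 2) /
          ((∫ y in Iic ξ, (ξ - y) ∂μ) / μ.real (Iic ξ)) ^ 2) ξ ∧
      0 < ((∫ y in Iic ξ, y ^ 2 ∂μ) / μ.real (Iic ξ) -
            ((∫ y in Iic ξ, y ∂μ) / μ.real (Iic ξ)) ^ 2) /
          ((∫ y in Iic ξ, (ξ - y) ∂μ) / μ.real (Iic ξ)) ^ 2 := by
  have hμ : MemLp id 2 μ := (memLp_two_iff_integrable_sq aestronglyMeasurable_id).2 hmom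
  have hden : 0 < ∫ y in Iic ξ, (ξ - y) ∂μ :=
    setIntegral_Iic_sub_pos ((integrable_const ξ).sub (hμ.integrable one_le_two)).integrableOn
      (by rwa [measure_congr Iio_ae_eq_Iic])
  have hF : 0 < μ.real (Iic ξ) := ENNReal.toReal_pos hξ (measure_ne_top _ _)
  have hvar := variance_cond_eq_sub hμ hξ
  simp only [id_eq] at hvar
  rw [← hvar]
  exact ⟨hasDerivAt_setIntegral_Iic_ratio hμ (measure_singleton ξ) hden.ne',
    div_pos (variance_id_cond_pos hμ hξ) (pow_pos (div_pos hden hF) 2)⟩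

theorem isOpenPosMeasure_withDensity {X : Type*} [TopologicalSpace X] [MeasurableSpace X]
    {ν : Measure X} [ν.IsOpenPosMeasure] {f : X → ENNReal} (hf : AEMeasurable f ν)
    (hf_ne_zero : ∀ᵐ x ∂ν, f x ≠ 0) : (ν.withDensity f).IsOpenPosMeasure :=
  (withDensity_absolutelyContinuous' hf hf_ne_zero).isOpenPosMeasure

/-- The ratio `r(ξ) = E[(ξ-Y) Y 1{Y≤ξ}] / E[(ξ-Y) 1{Y≤ξ}]` is differentiable with derivative
`r'(ξ) = V(ξ) / M(ξ)²` where, writing `F(ξ) = μ(Iic ξ) > 0`,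
`M(ξ) = E[ξ - Y ∣ Y ≤ ξ]` and `V(ξ)` is the conditional variance of `Y` given `Y ≤ ξ`;
in particular `r'(ξ) > 0` for every `ξ`. -/
theorem stmt_5 (μ : Measure ℝ) [IsProbabilityMeasure μ] (p : ℝ → ℝ)
    (hp_cont : Continuous p) (hp_pos : ∀ x, 0 < p x)
    (hμ : μ = MeasureTheory.volume.withDensity fun x => ENNReal.ofReal (p x))
    (hmom : Integrable (fun y => y ^ 2) μ) :
    ∀ ξ : ℝ,
      0 < (μ (Set.Iic ξ)).toReal ∧
      HasDerivAt
        (fun t : ℝ =>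
          (∫ y in Set.Iic t, (t - y) * y ∂μ) / (∫ y in Set.Iic t, (t - y) ∂μ))
        (((∫ y in Set.Iic ξ, y ^ 2 ∂μ) / (μ (Set.Iic ξ)).toReal -
            ((∫ y in Set.Iic ξ, y ∂μ) / (μ (Set.Iic ξ)).toReal) ^ 2) /
          ((∫ y in Set.Iic ξ, (ξ - y) ∂μ) / (μ (Set.Iic ξ)).toReal) ^ 2) ξ ∧
      0 < ((∫ y in Set.Iic ξ, y ^ 2 ∂μ) / (μ (Set.Iic ξ)).toReal -
            ((∫ y in Set.Iic ξ, y ∂μ) / (μ (Set.Iic ξ)).toReal) ^ 2) /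
          ((∫ y in Set.Iic ξ, (ξ - y) ∂μ) / (μ (Set.Iic ξ)).toReal) ^ 2 := by
  intro ξ
  have : NullSingletonClass μ := hμ ▸ inferInstance
  have : μ.IsOpenPosMeasure :=
    hμ ▸ isOpenPosMeasure_withDensity hp_cont.aemeasurable.ennreal_ofReal
      (.of_forall fun x => (ENNReal.ofReal_pos.2 (hp_pos x)).ne')
  have hξ : μ (Iic ξ) ≠ 0 :=
    ((μ.measure_Iio_pos ξ).trans_le (measure_mono Iio_subset_Iic_self)).ne'
  exact ⟨ENNReal.toReal_pos hξ (measure_ne_top _ _), stmt_5_general hmom hξ⟩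
end

section
/- Let θ > 0, let 0 ≤ W₋ < W₊ be real numbers, let λ > 0, and suppose ξ ∈ ℝ is such that the winsorized function h*(y) := min(W₊, max(W₋, λ·(ξ−y))) satisfies ∫ h* dμ = 1 and ∫ y·h*(y) dμ(y) = E[Y] − θ. Then for every measurable h : ℝ → ℝ with W₋ ≤ h(y) ≤ W₊ for μ-almost every y, ∫ h dμ = 1, and ∫ y·h(y) dμ(y) ≤ E[Y] − θ, one has ∫ h² dμ ≥ ∫ (h*)² dμ. (Solution of the sensitivity-value program subject additionally to the marginal sensitivity model bounds W₋ ≤ h ≤ W₊.) -/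
open MeasureTheory

/-!
Write `c = winsorize a b u` with `u = lam * (ξ - X)`. Pointwise, `c` is the projection of `u` onto
`[a, b]`, so every `x ∈ [a, b]` makes a nonnegative product `(c - u) * (x - c)`, whence
`c ^ 2 + 2 * (u * x - u * c) ≤ x ^ 2`. Integrated along a competitor `g`, this reduces the claim to
`∫ u * c ≤ ∫ u * g`. As `u` is affine in `X` with nonpositive slope, that inequality is a
consequence of `g` having the same integral as `c` and no larger integral against `X`: `lam` and
`lam * ξ` are, up to a factor `2`, the Lagrange multipliers of the two constraints.
-/

/-- The winsorization of `t` at levels `a` and `b`: the value of `t` truncated to `[a, b]`. It is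
meant for `a ≤ b`, and is constantly `b` otherwise. -/
def winsorize {α : Type*} [LinearOrder α] (a b t : α) : α :=
  min b (max a t)

theorem winsorize_mem_Icc {α : Type*} [LinearOrder α] {a b : α} (hab : a ≤ b) (t : α) :
    winsorize a b t ∈ Set.Icc a b :=
  ⟨le_min hab (le_max_left a t), min_le_left b (max a t)⟩

theorem continuous_winsorize {α : Type*} [LinearOrder α] [TopologicalSpace α]
    [OrderClosedTopology α] (a b : α) : Continuous (winsorize a b) :=
  continuous_const.min (continuous_const.max continuous_id)

section OrderedRing

variable {R : Type*} [CommRing R] [LinearOrder R] [IsOrderedRing R] {a b x : R}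

theorem winsorize_sub_mul_sub_winsorize_nonneg (hx : x ∈ Set.Icc a b) (t : R) :
    0 ≤ (winsorize a b t - t) * (x - winsorize a b t) := by
  have hab : a ≤ b := hx.1.trans hx.2
  rcases le_total t a with hta | hat
  · rw [winsorize, max_eq_left hta, min_eq_right hab]
    exact mul_nonneg (sub_nonneg.2 hta) (sub_nonneg.2 hx.1)
  rcases le_total t b with htb | hbt
  · rw [winsorize, max_eq_right hat, min_eq_right htb, sub_self, zero_mul]
  · rw [winsorize, max_eq_right hat, min_eq_left hbt]
    exact mul_nonneg_of_nonpos_of_nonpos (sub_nonpos.2 hbt) (sub_nonpos.2 hx.2)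

theorem winsorize_sq_add_two_mul_sub_le_sq (hx : x ∈ Set.Icc a b) (t : R) :
    winsorize a b t ^ 2 + 2 * (t * x - t * winsorize a b t) ≤ x ^ 2 := by
  set c := winsorize a b t
  have hproj : 0 ≤ (c - t) * (x - c) := winsorize_sub_mul_sub_winsorize_nonneg hx t
  calc c ^ 2 + 2 * (t * x - t * c)
      ≤ c ^ 2 + 2 * (t * x - t * c) + ((x - c) ^ 2 + 2 * ((c - t) * (x - c))) :=
        le_add_of_nonneg_right (add_nonneg (sq_nonneg _) (mul_nonneg zero_le_two hproj))
    _ = x ^ 2 := by ring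

end OrderedRing

section Integral

variable {Ω : Type*} {mΩ : MeasurableSpace Ω} {μ : Measure Ω}

theorem integral_const_mul_const_sub_mul {𝕜 : Type*} [RCLike 𝕜] {f g : Ω → 𝕜}
    (hg : Integrable g μ) (hfg : Integrable (fun ω => f ω * g ω) μ) (r k : 𝕜) :
    ∫ ω, r * (k - f ω) * g ω ∂μ = r * (k * ∫ ω, g ω ∂μ - ∫ ω, f ω * g ω ∂μ) := by
  simp only [mul_assoc, sub_mul]
  rw [integral_const_mul, integral_sub (hg.const_mul k) hfg, integral_const_mul]

variable {g : Ω → ℝ} {a b : ℝ}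

theorem integrable_mul_of_ae_mem_Icc {u : Ω → ℝ} (hu : Integrable u μ)
    (hg : AEStronglyMeasurable g μ) (hmem : ∀ᵐ ω ∂μ, g ω ∈ Set.Icc a b) :
    Integrable (fun ω => u ω * g ω) μ :=
  hu.mul_bdd hg (hmem.mono fun _ hω => abs_le_max_abs_abs hω.1 hω.2)

theorem ae_winsorize_mem_Icc (hmem : ∀ᵐ ω ∂μ, g ω ∈ Set.Icc a b) (u : Ω → ℝ) :
    ∀ᵐ ω ∂μ, winsorize a b (u ω) ∈ Set.Icc a b :=
  hmem.mono fun ω hω => winsorize_mem_Icc (hω.1.trans hω.2) (u ω)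

variable [IsFiniteMeasure μ]

theorem integral_winsorize_sq_le {u : Ω → ℝ} (hu : Integrable u μ)
    (hg : AEStronglyMeasurable g μ) (hmem : ∀ᵐ ω ∂μ, g ω ∈ Set.Icc a b)
    (hle : ∫ ω, u ω * winsorize a b (u ω) ∂μ ≤ ∫ ω, u ω * g ω ∂μ) :
    ∫ ω, winsorize a b (u ω) ^ 2 ∂μ ≤ ∫ ω, g ω ^ 2 ∂μ := by
  set c : Ω → ℝ := fun ω => winsorize a b (u ω)
  have hc : AEStronglyMeasurable c μ :=
    (continuous_winsorize a b).comp_aestronglyMeasurable hu.aestronglyMeasurable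
  have hc_mem : ∀ᵐ ω ∂μ, c ω ∈ Set.Icc a b := ae_winsorize_mem_Icc hmem u
  have hc_sq : Integrable (fun ω => c ω ^ 2) μ := (memLp_of_bounded hc_mem hc 2).integrable_sq
  have hg_sq : Integrable (fun ω => g ω ^ 2) μ := (memLp_of_bounded hmem hg 2).integrable_sq
  have huc : Integrable (fun ω => u ω * c ω) μ := integrable_mul_of_ae_mem_Icc hu hc hc_mem
  have hug : Integrable (fun ω => u ω * g ω) μ := integrable_mul_of_ae_mem_Icc hu hg hmem
  have hgap : Integrable (fun ω => 2 * (u ω * g ω - u ω * c ω)) μ := (hug.sub huc).const_mul 2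
  calc ∫ ω, c ω ^ 2 ∂μ
      ≤ ∫ ω, c ω ^ 2 ∂μ + 2 * (∫ ω, u ω * g ω ∂μ - ∫ ω, u ω * c ω ∂μ) := by linarith
    _ = ∫ ω, c ω ^ 2 + 2 * (u ω * g ω - u ω * c ω) ∂μ := by
      rw [integral_add hc_sq hgap, integral_const_mul, integral_sub hug huc]
    _ ≤ ∫ ω, g ω ^ 2 ∂μ :=
      integral_mono_ae (hc_sq.add hgap) hg_sq <|
        hmem.mono fun ω hω => winsorize_sq_add_two_mul_sub_le_sq hω (u ω)

theorem stmt_8_general {X : Ω → ℝ} {lam ξ : ℝ} (hX : Integrable X μ) (hlam : 0 ≤ lam)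
    (hg : AEStronglyMeasurable g μ) (hmem : ∀ᵐ ω ∂μ, g ω ∈ Set.Icc a b)
    (hmean : ∫ ω, g ω ∂μ = ∫ ω, winsorize a b (lam * (ξ - X ω)) ∂μ)
    (hshift : ∫ ω, X ω * g ω ∂μ ≤ ∫ ω, X ω * winsorize a b (lam * (ξ - X ω)) ∂μ) :
    ∫ ω, winsorize a b (lam * (ξ - X ω)) ^ 2 ∂μ ≤ ∫ ω, g ω ^ 2 ∂μ := by
  have hu : Integrable (fun ω => lam * (ξ - X ω)) μ :=
    ((integrable_const ξ).sub hX).const_mul lam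
  have hc : AEStronglyMeasurable (fun ω => winsorize a b (lam * (ξ - X ω))) μ :=
    (continuous_winsorize a b).comp_aestronglyMeasurable hu.aestronglyMeasurable
  have hc_mem : ∀ᵐ ω ∂μ, winsorize a b (lam * (ξ - X ω)) ∈ Set.Icc a b :=
    ae_winsorize_mem_Icc hmem _
  refine integral_winsorize_sq_le hu hg hmem ?_
  rw [integral_const_mul_const_sub_mul (.of_mem_Icc a b hc.aemeasurable hc_mem)
      (integrable_mul_of_ae_mem_Icc hX hc hc_mem),
    integral_const_mul_const_sub_mul (.of_mem_Icc a b hg.aemeasurable hmem)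
      (integrable_mul_of_ae_mem_Icc hX hg hmem), hmean]
  gcongr

end Integral

/-- Solution of the sensitivity-value program subject additionally to the marginal
sensitivity model bounds `W₋ ≤ h ≤ W₊`: the winsorized weight
`h*(y) = min(W₊, max(W₋, λ (ξ - y)))`, assumed to satisfy the mean-one and
outcome-shift constraints, minimizes the second moment among all a.e.-bounded
mean-one weights with `∫ y h(y) dμ ≤ E[Y] - θ`. -/
theorem stmt_8 (μ : Measure ℝ) [IsProbabilityMeasure μ] (p : ℝ → ℝ)
    (hp_cont : Continuous p) (hp_pos : ∀ x, 0 < p x)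
    (hμ : μ = MeasureTheory.volume.withDensity fun x => ENNReal.ofReal (p x))
    (hmom : Integrable (fun y => y ^ 2) μ)
    (θ : ℝ) (hθ : 0 < θ)
    (Wm Wp : ℝ) (hWm : 0 ≤ Wm) (hWmp : Wm < Wp)
    (lam : ℝ) (hlam : 0 < lam) (ξ : ℝ)
    (hstar : ℝ → ℝ) (hhstar : ∀ y, hstar y = min Wp (max Wm (lam * (ξ - y))))
    (hmean : (∫ y, hstar y ∂μ) = 1)
    (hshift : (∫ y, y * hstar y ∂μ) = (∫ y, y ∂μ) - θ) :
    ∀ h : ℝ → ℝ, Measurable h →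
      (∀ᵐ y ∂μ, Wm ≤ h y ∧ h y ≤ Wp) →
      (∫ y, h y ∂μ) = 1 → (∫ y, y * h y ∂μ) ≤ (∫ y, y ∂μ) - θ →
      (∫ y, hstar y ^ 2 ∂μ) ≤ ∫ y, h y ^ 2 ∂μ := by
  intro h hh hbounds hh_mean hh_shift
  obtain rfl : hstar = fun y => winsorize Wm Wp (lam * (ξ - y)) := funext hhstar
  have hY : Integrable (fun y => y) μ :=
    ((memLp_two_iff_integrable_sq aestronglyMeasurable_id).2 hmom).integrable one_le_two
  exact stmt_8_general hY hlam.le hh.aestronglyMeasurable hbounds (hh_mean.trans hmean.symm)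
    (hh_shift.trans_eq hshift.symm)
end

section
/- Let λ > 0 and let ξ ∈ ℝ be the unique real number with E[(ξ−Y)·1{Y≤ξ}] = 1/λ. Define h*(y) := λ·(ξ−y)·1{y≤ξ}. Then h* ≥ 0, ∫ h* dμ = 1, and for every measurable h : ℝ → [0,∞) with ∫ h dμ = 1, ∫ h² dμ < ∞ and ∫ |y|·h(y) dμ(y) < ∞, one has (1/2)·∫ h² dμ + λ·∫ y·h(y) dμ(y) ≥ (1/2)·∫ (h*)² dμ + λ·∫ y·h*(y) dμ(y). (Closed-form solution of the Lagrangian formulation of the L²-sensitivity analysis.) -/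
open MeasureTheory

/-!
Charging the constraint `∫ h = 1` with the multiplier `lam * ξ` turns the objective into the
integral of `t²/2 - lam * (ξ - y) * t` at `t = h`. For each `y` this is a parabola in `t`, minimized
over `t ≥ 0` at `h* y`, the positive part of its vertex `lam * (ξ - y)`; since `h*` also satisfies
the constraint, integrating the pointwise minimality gives the claim.
-/

/-- The candidate optimal weight `h*` at the outcome value `y`, with slope `lam` and
threshold `ξ`. -/
noncomputable def hingeWeight (lam ξ y : ℝ) : ℝ :=
  if y ≤ ξ then lam * (ξ - y) else 0

/-- The integrand of the sensitivity objective at outcome value `y` and weight `t`, once the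
multiplier `lam * ξ` of the mass constraint has been absorbed. -/
noncomputable def lagrangianIntegrand (lam ξ y t : ℝ) : ℝ :=
  (1 / 2) * t ^ 2 - lam * (ξ - y) * t

/-- The sensitivity objective `(1/2) ∫ h² + lam ∫ Y h` of the weight `h`, for an outcome `Y` defined
on an arbitrary measure space. Both integrals have to exist for it to be meaningful. -/
noncomputable def sensitivityObjective {Ω : Type*} [MeasurableSpace Ω] (μ : Measure Ω) (lam : ℝ)
    (Y h : Ω → ℝ) : ℝ :=
  (1 / 2) * (∫ ω, h ω ^ 2 ∂μ) + lam * (∫ ω, Y ω * h ω ∂μ)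

section Pointwise

variable {lam : ℝ}

lemma hingeWeight_nonneg (hlam : 0 ≤ lam) (ξ y : ℝ) : 0 ≤ hingeWeight lam ξ y := by
  unfold hingeWeight
  split_ifs with hy
  · exact mul_nonneg hlam (sub_nonneg.2 hy)
  · exact le_rfl

lemma mul_sub_le_hingeWeight (hlam : 0 ≤ lam) (ξ y : ℝ) :
    lam * (ξ - y) ≤ hingeWeight lam ξ y := by
  unfold hingeWeight
  split_ifs with hy
  · exact le_rfl
  · exact mul_nonpos_of_nonneg_of_nonpos hlam (sub_nonpos.2 (not_le.1 hy).le)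

lemma hingeWeight_comp_eq_indicator {Ω : Type*} (lam ξ : ℝ) (Y : Ω → ℝ) :
    (fun ω => hingeWeight lam ξ (Y ω)) =
      {ω | Y ω ≤ ξ}.indicator (fun ω => lam * (ξ - Y ω)) :=
  rfl

-- Complementary slackness for the constraint `0 ≤ t`.
lemma mul_sub_mul_hingeWeight (lam ξ y : ℝ) :
    lam * (ξ - y) * hingeWeight lam ξ y = hingeWeight lam ξ y ^ 2 := by
  unfold hingeWeight
  split_ifs <;> ring

lemma lagrangianIntegrand_eq (lam ξ y t : ℝ) :
    lagrangianIntegrand lam ξ y t = (1 / 2) * t ^ 2 + lam * (y * t) - lam * ξ * t := by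
  unfold lagrangianIntegrand
  ring

lemma lagrangianIntegrand_hingeWeight_le (hlam : 0 ≤ lam) (ξ y : ℝ) {t : ℝ} (ht : 0 ≤ t) :
    lagrangianIntegrand lam ξ y (hingeWeight lam ξ y) ≤ lagrangianIntegrand lam ξ y t := by
  unfold lagrangianIntegrand
  set w := hingeWeight lam ξ y
  calc (1 / 2) * w ^ 2 - lam * (ξ - y) * w
      = (1 / 2) * w ^ 2 - w ^ 2 := by rw [mul_sub_mul_hingeWeight]
    _ ≤ (1 / 2) * t ^ 2 - w * t := by linarith [sq_nonneg (t - w), sub_sq t w]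
    _ ≤ (1 / 2) * t ^ 2 - lam * (ξ - y) * t := by
      gcongr
      exact mul_sub_le_hingeWeight hlam ξ y

end Pointwise

section Integral

variable {Ω : Type*} [MeasurableSpace Ω] {μ : Measure Ω} {Y h : Ω → ℝ} {lam ξ : ℝ}

lemma integrable_const_sub_sq [IsFiniteMeasure μ] (hY : AEStronglyMeasurable Y μ)
    (hsq : Integrable (fun ω => Y ω ^ 2) μ) (ξ : ℝ) : Integrable (fun ω => (ξ - Y ω) ^ 2) μ :=
  ((memLp_const ξ).sub ((memLp_two_iff_integrable_sq hY).2 hsq)).integrable_sq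

lemma integral_hingeWeight (hY : AEMeasurable Y μ) (lam ξ : ℝ) :
    ∫ ω, hingeWeight lam ξ (Y ω) ∂μ = lam * ∫ ω in {ω | Y ω ≤ ξ}, (ξ - Y ω) ∂μ := by
  rw [hingeWeight_comp_eq_indicator,
    integral_indicator₀ (nullMeasurableSet_le hY aemeasurable_const), integral_const_mul]

lemma integrable_hingeWeight_sq (hY : AEMeasurable Y μ) (lam : ℝ)
    (hsq : IntegrableOn (fun ω => (ξ - Y ω) ^ 2) {ω | Y ω ≤ ξ} μ) :
    Integrable (fun ω => hingeWeight lam ξ (Y ω) ^ 2) μ := by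
  have heq : (fun ω => hingeWeight lam ξ (Y ω) ^ 2) =
      {ω | Y ω ≤ ξ}.indicator (fun ω => lam ^ 2 * (ξ - Y ω) ^ 2) := by
    ext ω
    simp only [hingeWeight, Set.indicator_apply, Set.mem_ofPred_eq]
    split_ifs <;> ring
  rw [heq]
  exact IntegrableOn.integrable_indicator₀ (hsq.const_mul (lam ^ 2))
    (nullMeasurableSet_le hY aemeasurable_const)

lemma integrable_mul_hingeWeight (hlam : lam ≠ 0)
    (hint : Integrable (fun ω => hingeWeight lam ξ (Y ω)) μ)
    (hsq : Integrable (fun ω => hingeWeight lam ξ (Y ω) ^ 2) μ) :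
    Integrable (fun ω => Y ω * hingeWeight lam ξ (Y ω)) μ := by
  have heq : ∀ ω, ξ * hingeWeight lam ξ (Y ω) - lam⁻¹ * hingeWeight lam ξ (Y ω) ^ 2 =
      Y ω * hingeWeight lam ξ (Y ω) := fun ω => by
    rw [← mul_sub_mul_hingeWeight]
    field_simp
    ring
  exact ((hint.const_mul ξ).sub (hsq.const_mul lam⁻¹)).congr (ae_of_all μ heq)

lemma integrable_lagrangianIntegrand (lam ξ : ℝ) (hint : Integrable h μ)
    (hsq : Integrable (fun ω => h ω ^ 2) μ) (hYh : Integrable (fun ω => Y ω * h ω) μ) :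
    Integrable (fun ω => lagrangianIntegrand lam ξ (Y ω) (h ω)) μ := by
  simp only [lagrangianIntegrand_eq]
  exact ((hsq.const_mul _).add (hYh.const_mul _)).sub (hint.const_mul _)

lemma integral_lagrangianIntegrand (lam ξ : ℝ) (hint : Integrable h μ)
    (hsq : Integrable (fun ω => h ω ^ 2) μ) (hYh : Integrable (fun ω => Y ω * h ω) μ) :
    ∫ ω, lagrangianIntegrand lam ξ (Y ω) (h ω) ∂μ =
      sensitivityObjective μ lam Y h - lam * ξ * ∫ ω, h ω ∂μ := by
  simp only [lagrangianIntegrand_eq]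
  have hcost : Integrable (fun ω => (1 / 2) * h ω ^ 2 + lam * (Y ω * h ω)) μ :=
    (hsq.const_mul _).add (hYh.const_mul _)
  rw [integral_sub hcost (hint.const_mul _), integral_add (hsq.const_mul _) (hYh.const_mul _)]
  simp only [integral_const_mul, sensitivityObjective]

theorem sensitivityObjective_hingeWeight_le (hlam : 0 < lam)
    (hw : Integrable (fun ω => hingeWeight lam ξ (Y ω)) μ)
    (hw_sq : Integrable (fun ω => hingeWeight lam ξ (Y ω) ^ 2) μ)
    (h_nonneg : 0 ≤ᵐ[μ] h) (hint : Integrable h μ)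
    (hmass : ∫ ω, h ω ∂μ = ∫ ω, hingeWeight lam ξ (Y ω) ∂μ)
    (hsq : Integrable (fun ω => h ω ^ 2) μ) (hYh : Integrable (fun ω => Y ω * h ω) μ) :
    sensitivityObjective μ lam Y (fun ω => hingeWeight lam ξ (Y ω)) ≤
      sensitivityObjective μ lam Y h := by
  have hYw := integrable_mul_hingeWeight hlam.ne' hw hw_sq
  have hle := integral_mono_ae (integrable_lagrangianIntegrand lam ξ hw hw_sq hYw)
    (integrable_lagrangianIntegrand lam ξ hint hsq hYh)
    (h_nonneg.mono fun ω hω => lagrangianIntegrand_hingeWeight_le hlam.le ξ (Y ω) hω)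
  rwa [integral_lagrangianIntegrand lam ξ hw hw_sq hYw,
    integral_lagrangianIntegrand lam ξ hint hsq hYh, hmass, sub_le_sub_iff_right] at hle

theorem stmt_10_general (hY : AEMeasurable Y μ)
    (hsq : IntegrableOn (fun ω => (ξ - Y ω) ^ 2) {ω | Y ω ≤ ξ} μ) (hlam : 0 < lam)
    (hξ : ∫ ω in {ω | Y ω ≤ ξ}, (ξ - Y ω) ∂μ = 1 / lam) :
    (∀ ω, 0 ≤ hingeWeight lam ξ (Y ω)) ∧
    ∫ ω, hingeWeight lam ξ (Y ω) ∂μ = 1 ∧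
    ∀ h : Ω → ℝ, 0 ≤ᵐ[μ] h → ∫ ω, h ω ∂μ = 1 →
      Integrable (fun ω => h ω ^ 2) μ → Integrable (fun ω => |Y ω| * h ω) μ →
      sensitivityObjective μ lam Y (fun ω => hingeWeight lam ξ (Y ω)) ≤
        sensitivityObjective μ lam Y h := by
  have hw_mass : ∫ ω, hingeWeight lam ξ (Y ω) ∂μ = 1 := by
    rw [integral_hingeWeight hY, hξ, mul_one_div_cancel hlam.ne']
  refine ⟨fun ω => hingeWeight_nonneg hlam.le ξ (Y ω), hw_mass,
    fun h h_nonneg h_mass h_sq h_abs => ?_⟩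
  have hw : Integrable (fun ω => hingeWeight lam ξ (Y ω)) μ :=
    .of_integral_ne_zero (hw_mass.trans_ne one_ne_zero)
  have h_int : Integrable h μ := .of_integral_ne_zero (h_mass.trans_ne one_ne_zero)
  have hYh : Integrable (fun ω => Y ω * h ω) μ :=
    h_abs.congr' (hY.aestronglyMeasurable.mul h_int.aestronglyMeasurable)
      (ae_of_all μ fun ω => by simp only [norm_mul, Real.norm_eq_abs, abs_abs])
  exact sensitivityObjective_hingeWeight_le hlam hw (integrable_hingeWeight_sq hY lam hsq)
    h_nonneg h_int (h_mass.trans hw_mass.symm) h_sq hYh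

end Integral

/-- Closed-form solution of the Lagrangian formulation of the `L²`-sensitivity analysis:
with `ξ` the unique real satisfying `E[(ξ-Y) 1{Y≤ξ}] = 1/λ` and
`h*(y) = λ (ξ-y) 1{y≤ξ}`, the weight `h*` is nonnegative, has mean one, and minimizes
`(1/2) ∫ h² dμ + λ ∫ y h(y) dμ` among nonnegative mean-one weights `h` with finite
second moment and `∫ |y| h(y) dμ < ∞`. -/
theorem stmt_10 (μ : Measure ℝ) [IsProbabilityMeasure μ] (p : ℝ → ℝ)
    (hp_cont : Continuous p) (hp_pos : ∀ x, 0 < p x)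
    (hμ : μ = MeasureTheory.volume.withDensity fun x => ENNReal.ofReal (p x))
    (hmom : Integrable (fun y => y ^ 2) μ)
    (lam : ℝ) (hlam : 0 < lam) (ξ : ℝ)
    (hξ : (∫ y in Set.Iic ξ, (ξ - y) ∂μ) = 1 / lam)
    (hstar : ℝ → ℝ) (hhstar : ∀ y, hstar y = if y ≤ ξ then lam * (ξ - y) else 0) :
    (∀ y, 0 ≤ hstar y) ∧
    (∫ y, hstar y ∂μ) = 1 ∧
    ∀ h : ℝ → ℝ, Measurable h → (∀ y, 0 ≤ h y) → (∫ y, h y ∂μ) = 1 →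
      Integrable (fun y => h y ^ 2) μ → Integrable (fun y => |y| * h y) μ →
      (1 / 2) * (∫ y, hstar y ^ 2 ∂μ) + lam * (∫ y, y * hstar y ∂μ) ≤
        (1 / 2) * (∫ y, h y ^ 2 ∂μ) + lam * (∫ y, y * h y ∂μ) := by
  obtain rfl : hstar = hingeWeight lam ξ := funext hhstar
  have hsq := (integrable_const_sub_sq aestronglyMeasurable_id hmom ξ).integrableOn (s := Set.Iic ξ)
  obtain ⟨hw_nonneg, hw_mass, hw_min⟩ := stmt_10_general aemeasurable_id hsq hlam hξ
  exact ⟨hw_nonneg, hw_mass, fun h _ h_nonneg => hw_min h (ae_of_all μ h_nonneg)⟩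
end

section
/- Let (Ω, 𝔽, P) be a probability space carrying a random variable X with values in a measurable space, an integrable real random variable Y₁, and a random variable Z with values in {0,1}. Let e be a version of the conditional probability P[Z = 1 ∣ σ(X, Y₁)], and assume e ≥ ρ almost surely for some constant ρ > 0. Then E[Z·Y₁ / e ∣ σ(X)] = E[Y₁ ∣ σ(X)] almost surely. (Inverse probability weighting identification formula for the conditional average treated outcome.) -/
open MeasureTheory

/-!
For an integrable weight `W ≥ 0` and an `m₂`-measurable `Y`, write `e = E[W ∣ m₂]`. Pulling `Y / e`
out of the conditional expectation gives `E[W Y / e ∣ m₂] = (Y / e) · e = Y`, and the tower property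
carries this down to `m₁ ≤ m₂`. The pull-out needs `W Y / e` to be integrable; positivity of `e` is
enough for this, because `E[W |Y| / e] = E[e |Y| / e] = E|Y|` holds in `[0, ∞]`.
-/

open scoped ENNReal

theorem indicator_setOf_eq_one {α M : Type*} [Zero M] [One M] {f : α → M}
    (hf : ∀ a, f a = 0 ∨ f a = 1) : {a | f a = 1}.indicator (fun _ => 1) = f :=
  calc {a | f a = 1}.indicator (fun _ => 1)
      = {a | f a = 1}.indicator f := Set.indicator_congr fun _ ha => ha.symm
    _ = f := Set.indicator_eq_self.2 fun a ha => (hf a).resolve_left ha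

section PullOut

variable {Ω : Type*} {m m₀ : MeasurableSpace Ω} {μ : Measure Ω}

theorem lintegral_condLExp_mul (hm : m ≤ m₀) [SigmaFinite (μ.trim hm)] {f g : Ω → ℝ≥0∞}
    (hf : AEMeasurable f μ) (hg : Measurable[m] g) :
    ∫⁻ ω, (μ⁻[f | m]) ω * g ω ∂μ = ∫⁻ ω, f ω * g ω ∂μ := by
  have hg₀ : Measurable g := hg.mono hm le_rfl
  have hmeasure : (μ.withDensity (μ⁻[f | m])).trim hm = (μ.withDensity f).trim hm := by
    refine @Measure.ext _ m _ _ fun s hs => ?_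
    rw [trim_measurableSet_eq hm hs, trim_measurableSet_eq hm hs, withDensity_apply _ (hm s hs),
      withDensity_apply _ (hm s hs), setLIntegral_condLExp hm μ f hs]
  calc ∫⁻ ω, (μ⁻[f | m]) ω * g ω ∂μ
      = ∫⁻ ω, g ω ∂μ.withDensity (μ⁻[f | m]) :=
        (lintegral_withDensity_eq_lintegral_mul μ (measurable_condLExp' m μ f) hg₀).symm
    _ = ∫⁻ ω, g ω ∂μ.withDensity f := by
        rw [← lintegral_trim hm hg, hmeasure, lintegral_trim hm hg]
    _ = ∫⁻ ω, f ω * g ω ∂μ := lintegral_withDensity_eq_lintegral_mul₀ hf hg₀.aemeasurable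

theorem lintegral_enorm_condExp_mul (hm : m ≤ m₀) [SigmaFinite (μ.trim hm)] {f : Ω → ℝ}
    {g : Ω → ℝ≥0∞} (hf : Integrable f μ) (hf_nonneg : 0 ≤ᵐ[μ] f) (hg : Measurable[m] g) :
    ∫⁻ ω, ‖(μ[f | m]) ω‖ₑ * g ω ∂μ = ∫⁻ ω, ‖f ω‖ₑ * g ω ∂μ := by
  rw [← lintegral_condLExp_mul hm hf.aestronglyMeasurable.enorm hg]
  refine lintegral_congr_ae ?_
  filter_upwards [condLExp_enorm m hf hf_nonneg] with ω hω
  rw [hω]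

variable {E : Type*} [NormedAddCommGroup E] [NormedSpace ℝ E]

theorem integrable_condExp_smul_iff (hm : m ≤ m₀) [SigmaFinite (μ.trim hm)] {f : Ω → ℝ}
    {g : Ω → E} (hf : Integrable f μ) (hf_nonneg : 0 ≤ᵐ[μ] f) (hg : AEStronglyMeasurable[m] g μ) :
    Integrable (μ[f | m] • g) μ ↔ Integrable (f • g) μ := by
  have hg₀ : AEStronglyMeasurable g μ := hg.mono hm
  have lintegral_enorm_smul_mk (h : Ω → ℝ) :
      ∫⁻ ω, ‖(h • g) ω‖ₑ ∂μ = ∫⁻ ω, ‖h ω‖ₑ * ‖hg.mk g ω‖ₑ ∂μ := by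
    refine lintegral_congr_ae ?_
    filter_upwards [hg.ae_eq_mk] with ω hω
    rw [Pi.smul_apply', enorm_smul, hω]
  have hlintegral : ∫⁻ ω, ‖(μ[f | m] • g) ω‖ₑ ∂μ = ∫⁻ ω, ‖(f • g) ω‖ₑ ∂μ := by
    rw [lintegral_enorm_smul_mk, lintegral_enorm_smul_mk,
      lintegral_enorm_condExp_mul hm hf hf_nonneg hg.stronglyMeasurable_mk.enorm]
  simp only [Integrable, HasFiniteIntegral, hlintegral, hf.aestronglyMeasurable.smul hg₀,
    integrable_condExp.aestronglyMeasurable.smul hg₀, true_and]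

theorem condExp_smul_inv_condExp_smul [CompleteSpace E] (hm : m ≤ m₀) [SigmaFinite (μ.trim hm)]
    {W : Ω → ℝ} {Y : Ω → E} (hW : Integrable W μ) (hW_nonneg : 0 ≤ᵐ[μ] W)
    (hW_pos : ∀ᵐ ω ∂μ, 0 < (μ[W | m]) ω) (hY : Integrable Y μ)
    (hY_meas : AEStronglyMeasurable[m] Y μ) :
    μ[W • (μ[W | m])⁻¹ • Y | m] =ᵐ[μ] Y := by
  have hcancel : μ[W | m] • (μ[W | m])⁻¹ • Y =ᵐ[μ] Y := by
    filter_upwards [hW_pos] with ω hω using smul_inv_smul₀ hω.ne' (Y ω)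
  have hquot : AEStronglyMeasurable[m] ((μ[W | m])⁻¹ • Y) μ :=
    stronglyMeasurable_condExp.measurable.inv.stronglyMeasurable.aestronglyMeasurable.smul hY_meas
  have hint : Integrable (W • (μ[W | m])⁻¹ • Y) μ :=
    (integrable_condExp_smul_iff hm hW hW_nonneg hquot).1 (hY.congr hcancel.symm)
  exact (condExp_smul_of_aestronglyMeasurable_right hW hint hquot).trans hcancel

end PullOut

theorem stmt_12_general {Ω E : Type*} [NormedAddCommGroup E] [NormedSpace ℝ E] [CompleteSpace E]
    {m₁ m₂ m₀ : MeasurableSpace Ω} {μ : Measure Ω} (hm₁₂ : m₁ ≤ m₂) (hm₂ : m₂ ≤ m₀)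
    [SigmaFinite (μ.trim hm₂)] {W e : Ω → ℝ} {Y : Ω → E}
    (hW : Integrable W μ) (hW_nonneg : 0 ≤ᵐ[μ] W)
    (hY : Integrable Y μ) (hY_meas : AEStronglyMeasurable[m₂] Y μ)
    (he : e =ᵐ[μ] μ[W | m₂]) (he_pos : ∀ᵐ ω ∂μ, 0 < e ω) :
    μ[fun ω => (W ω / e ω) • Y ω | m₁] =ᵐ[μ] μ[Y | m₁] := by
  have hW_pos : ∀ᵐ ω ∂μ, 0 < (μ[W | m₂]) ω := by
    filter_upwards [he, he_pos] with ω hω hpos using hω ▸ hpos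
  have hweight : (fun ω => (W ω / e ω) • Y ω) =ᵐ[μ] W • (μ[W | m₂])⁻¹ • Y := by
    filter_upwards [he] with ω hω
    simp only [Pi.smul_apply', Pi.inv_apply, smul_smul, div_eq_mul_inv, hω]
  calc μ[fun ω => (W ω / e ω) • Y ω | m₁]
      =ᵐ[μ] μ[W • (μ[W | m₂])⁻¹ • Y | m₁] := condExp_congr_ae hweight
    _ =ᵐ[μ] μ[μ[W • (μ[W | m₂])⁻¹ • Y | m₂] | m₁] := (condExp_condExp_of_le hm₁₂ hm₂).symm
    _ =ᵐ[μ] μ[Y | m₁] :=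
        condExp_congr_ae (condExp_smul_inv_condExp_smul hm₂ hW hW_nonneg hW_pos hY hY_meas)

/-- Inverse probability weighting identification formula for the conditional average
treated outcome: if `e` is a version of `P[Z = 1 ∣ σ(X, Y₁)]` bounded below by `ρ > 0`
a.s., then `E[Z Y₁ / e ∣ σ(X)] = E[Y₁ ∣ σ(X)]` a.s. -/
theorem stmt_12 {Ω : Type*} [MeasurableSpace Ω] {β : Type*} [MeasurableSpace β]
    (P : Measure Ω) [IsProbabilityMeasure P]
    (X : Ω → β) (Y₁ : Ω → ℝ) (Z : Ω → ℝ)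
    (hX : Measurable X) (hY₁ : Measurable Y₁) (hZ : Measurable Z)
    (hZval : ∀ ω, Z ω = 0 ∨ Z ω = 1)
    (hY₁int : Integrable Y₁ P)
    (e : Ω → ℝ)
    (he : e =ᵐ[P]
      P[Set.indicator {ω | Z ω = 1} (fun _ => (1 : ℝ)) |
        MeasurableSpace.comap (fun ω => (X ω, Y₁ ω)) inferInstance])
    (ρ : ℝ) (hρ : 0 < ρ) (heρ : ∀ᵐ ω ∂P, ρ ≤ e ω) :
    P[fun ω => Z ω * Y₁ ω / e ω | MeasurableSpace.comap X inferInstance] =ᵐ[P]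
      P[Y₁ | MeasurableSpace.comap X inferInstance] := by
  have hZ_eq := indicator_setOf_eq_one hZval
  have hZ_int : Integrable Z P :=
    hZ_eq ▸ (integrable_const (1 : ℝ)).indicator (hZ (measurableSet_singleton 1))
  have hZ_nonneg : 0 ≤ Z := hZ_eq ▸ Set.indicator_nonneg fun _ _ => zero_le_one
  have hXY := comap_measurable (m := inferInstance) fun ω => (X ω, Y₁ ω)
  simpa only [smul_eq_mul, div_mul_eq_mul_div] using
    stmt_12_general hXY.fst.comap_le (hX.prodMk hY₁).comap_le hZ_int (ae_of_all P hZ_nonneg)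
      hY₁int hXY.snd.aestronglyMeasurable (hZ_eq ▸ he) (heρ.mono fun _ => hρ.trans_le)
end

section
/- Let (A, B) be random variables on a probability space with A real-valued and integrable, and B taking values in a countable set, and fix b with P(B = b) > 0. Let s be a bounded measurable real function of (A, B) with E[s(A,B)] = 0 and with A·s(A,B) integrable. For |ε| < 1/‖s‖_∞ define the tilted conditional expectation E_ε[A ∣ B = b] := E[A·1{B=b}·(1 + ε·s(A,B))] / E[1{B=b}·(1 + ε·s(A,B))]. Then the map ε ↦ E_ε[A ∣ B = b] is differentiable at ε = 0 with derivative E[ (1{B=b} / P(B=b)) · (A − E[A ∣ B = b]) · s(A,B) ]. (Lemma C.2: the efficient influence function of a conditional expectation as a pathwise derivative.) -/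
open MeasureTheory

/-!
Along the unnormalised path `(1 + ε g) • μ`, both the mass `D ε` and the integral `N ε` of `X` are
affine in `ε`, with slopes `∫ g` and `∫ g • X`. The quotient rule gives the mean `M = N / D` the
derivative `(∫ g • X - (∫ g) • M) / D = (∫ g • (X - M)) / D`. Conditioning on `B = b` is the case
where `μ` is the restriction of `P` to that event, with `D 0 = P(B = b)`.
-/

section TiltedMean

variable {Ω E : Type*} [MeasurableSpace Ω] [NormedAddCommGroup E] [NormedSpace ℝ E]
  {μ : Measure Ω} {g : Ω → ℝ} {X : Ω → E}

theorem hasDerivAt_integral_one_add_mul_smul (hX : Integrable X μ)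
    (hgX : Integrable (fun ω => g ω • X ω) μ) (t : ℝ) :
    HasDerivAt (fun ε : ℝ => ∫ ω, (1 + ε * g ω) • X ω ∂μ) (∫ ω, g ω • X ω ∂μ) t := by
  have affine (ε : ℝ) :
      ∫ ω, (1 + ε * g ω) • X ω ∂μ = (∫ ω, X ω ∂μ) + ε • ∫ ω, g ω • X ω ∂μ := by
    simp only [add_smul, one_smul, mul_smul]
    rw [integral_add hX (hgX.fun_smul ε), integral_smul]
  simp only [affine]
  simpa only [one_smul, id_eq] using
    ((hasDerivAt_id t).smul_const (∫ ω, g ω • X ω ∂μ)).const_add (∫ ω, X ω ∂μ)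

/-- The mean of `X` under the normalisation of the measure with density `1 + ε g` with respect to
`μ`. The measure `μ` need not have mass one, so that taking for `μ` the restriction of a law to an
event gives the tilted conditional expectation given that event. The value is `0` when the tilted
mass `∫ (1 + ε g) ∂μ` vanishes. -/
noncomputable def tiltedMean (μ : Measure Ω) (g : Ω → ℝ) (X : Ω → E) (ε : ℝ) : E :=
  (∫ ω, (1 + ε * g ω) ∂μ)⁻¹ • ∫ ω, (1 + ε * g ω) • X ω ∂μ

theorem tiltedMean_zero : tiltedMean μ g X 0 = ⨍ ω, X ω ∂μ := by
  simp [tiltedMean, average_eq]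

theorem hasDerivAt_tiltedMean [CompleteSpace E] [IsFiniteMeasure μ] (hg : Integrable g μ)
    (hX : Integrable X μ) (hgX : Integrable (fun ω => g ω • X ω) μ) {t : ℝ}
    (ht : ∫ ω, (1 + t * g ω) ∂μ ≠ 0) :
    HasDerivAt (tiltedMean μ g X)
      ((∫ ω, (1 + t * g ω) ∂μ)⁻¹ • ∫ ω, g ω • (X ω - tiltedMean μ g X t) ∂μ) t := by
  have mass : HasDerivAt (fun ε : ℝ => ∫ ω, (1 + ε * g ω) ∂μ) (∫ ω, g ω ∂μ) t := by
    simpa only [smul_eq_mul, mul_one] using hasDerivAt_integral_one_add_mul_smul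
      (g := g) (integrable_const (1 : ℝ)) (by simpa only [smul_eq_mul, mul_one] using hg) t
  have centered (m : E) :
      ∫ ω, g ω • (X ω - m) ∂μ = (∫ ω, g ω • X ω ∂μ) - (∫ ω, g ω ∂μ) • m := by
    simp only [smul_sub]
    rw [integral_sub hgX (hg.smul_const m), integral_smul_const]
  refine ((mass.fun_inv ht).fun_smul
    (hasDerivAt_integral_one_add_mul_smul hX hgX t)).congr_deriv ?_
  rw [centered, tiltedMean]
  module

theorem hasDerivAt_tiltedMean_zero [CompleteSpace E] [IsFiniteMeasure μ] [NeZero μ]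
    (hg : Integrable g μ) (hX : Integrable X μ) (hgX : Integrable (fun ω => g ω • X ω) μ) :
    HasDerivAt (tiltedMean μ g X) (⨍ ω, g ω • (X ω - ⨍ ω', X ω' ∂μ) ∂μ) 0 := by
  have mass_ne_zero : ∫ ω, (1 + 0 * g ω) ∂μ ≠ 0 := by simp [measureReal_univ_ne_zero]
  simpa [tiltedMean_zero, average_eq] using hasDerivAt_tiltedMean hg hX hgX mass_ne_zero

end TiltedMean

section Event

variable {Ω : Type*} [MeasurableSpace Ω] {μ : Measure Ω} {p : Ω → Prop} [DecidablePred p]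

theorem integral_ite_eq_setIntegral {E : Type*} [NormedAddCommGroup E] [NormedSpace ℝ E]
    (hp : MeasurableSet {ω | p ω}) (f : Ω → E) :
    ∫ ω, (if p ω then f ω else 0) ∂μ = ∫ ω in {ω | p ω}, f ω ∂μ := by
  rw [← integral_indicator hp]
  simp only [Set.indicator_apply, Set.mem_ofPred_eq]

theorem integral_mul_ite_div_integral_ite_eq_tiltedMean (hp : MeasurableSet {ω | p ω})
    (g X : Ω → ℝ) :
    (fun ε : ℝ =>
      (∫ ω, X ω * (if p ω then (1 : ℝ) else 0) * (1 + ε * g ω) ∂μ) /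
        (∫ ω, (if p ω then (1 : ℝ) else 0) * (1 + ε * g ω) ∂μ)) =
      tiltedMean (μ.restrict {ω | p ω}) g X := by
  funext ε
  simp only [mul_comm (X _), ite_mul, one_mul, zero_mul, integral_ite_eq_setIntegral hp,
    tiltedMean, smul_eq_mul, div_eq_inv_mul]

theorem integral_mul_ite_div_eq_setAverage (hp : MeasurableSet {ω | p ω}) (X : Ω → ℝ) :
    (∫ ω, X ω * (if p ω then (1 : ℝ) else 0) ∂μ) / (μ {ω | p ω}).toReal =
      ⨍ ω in {ω | p ω}, X ω ∂μ := by
  simp only [mul_ite, mul_one, mul_zero, integral_ite_eq_setIntegral hp, setAverage_eq,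
    Measure.real, smul_eq_mul, div_eq_inv_mul]

theorem integral_ite_div_mul_mul_eq_setAverage (hp : MeasurableSet {ω | p ω}) (X g : Ω → ℝ) :
    ∫ ω, (if p ω then (1 : ℝ) else 0) / (μ {ω | p ω}).toReal * X ω * g ω ∂μ =
      ⨍ ω in {ω | p ω}, g ω * X ω ∂μ := by
  rw [← integral_mul_ite_div_eq_setAverage hp, ← integral_div]
  congr with ω
  ring

theorem stmt_17_general (hp : MeasurableSet {ω | p ω}) (hpos : 0 < (μ {ω | p ω}).toReal)
    {g X : Ω → ℝ} (hg : IntegrableOn g {ω | p ω} μ) (hX : IntegrableOn X {ω | p ω} μ)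
    (hXg : IntegrableOn (fun ω => X ω * g ω) {ω | p ω} μ) :
    HasDerivAt
      (fun ε : ℝ =>
        (∫ ω, X ω * (if p ω then (1 : ℝ) else 0) * (1 + ε * g ω) ∂μ) /
          (∫ ω, (if p ω then (1 : ℝ) else 0) * (1 + ε * g ω) ∂μ))
      (∫ ω, (if p ω then (1 : ℝ) else 0) / (μ {ω | p ω}).toReal *
          (X ω - (∫ ω', X ω' * (if p ω' then (1 : ℝ) else 0) ∂μ) / (μ {ω | p ω}).toReal) *
          g ω ∂μ)
      0 := by
  obtain ⟨hμ_pos, hμ_lt_top⟩ := ENNReal.toReal_pos_iff.mp hpos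
  have : IsFiniteMeasure (μ.restrict {ω | p ω}) := isFiniteMeasure_restrict.mpr hμ_lt_top.ne
  have : NeZero (μ.restrict {ω | p ω}) := ⟨Measure.restrict_eq_zero.not.mpr hμ_pos.ne'⟩
  rw [integral_mul_ite_div_integral_ite_eq_tiltedMean hp, integral_mul_ite_div_eq_setAverage hp,
    integral_ite_div_mul_mul_eq_setAverage hp (fun ω => X ω - _)]
  exact hasDerivAt_tiltedMean_zero hg hX
    (by simpa only [smul_eq_mul, mul_comm] using hXg.integrable)

end Event

/-- Lemma C.2: the efficient influence function of a conditional expectation as a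
pathwise derivative.  For a zero-mean bounded score `s` and the tilted conditional
expectation `E_ε[A ∣ B = b] = E[A 1{B=b} (1 + ε s(A,B))] / E[1{B=b} (1 + ε s(A,B))]`,
the map `ε ↦ E_ε[A ∣ B = b]` is differentiable at `ε = 0` with derivative
`E[(1{B=b}/P(B=b)) (A - E[A ∣ B=b]) s(A,B)]`. -/
theorem stmt_17 {Ω β : Type*} [MeasurableSpace Ω] [MeasurableSpace β] [Countable β] [DecidableEq β]
    [MeasurableSingletonClass β]
    (P : Measure Ω) [IsProbabilityMeasure P]
    (A : Ω → ℝ) (B : Ω → β) (hAm : Measurable A) (hA : Integrable A P) (hB : Measurable B)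
    (b : β) (hb : 0 < (P {ω | B ω = b}).toReal)
    (s : ℝ → β → ℝ) (hs : Measurable (Function.uncurry s))
    (C : ℝ) (hsC : ∀ x c, |s x c| ≤ C)
    (hs0 : (∫ ω, s (A ω) (B ω) ∂P) = 0)
    (hAs : Integrable (fun ω => A ω * s (A ω) (B ω)) P) :
    HasDerivAt
      (fun ε : ℝ =>
        (∫ ω, A ω * (if B ω = b then (1 : ℝ) else 0) * (1 + ε * s (A ω) (B ω)) ∂P) /
          (∫ ω, (if B ω = b then (1 : ℝ) else 0) * (1 + ε * s (A ω) (B ω)) ∂P))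
      (∫ ω, (if B ω = b then (1 : ℝ) else 0) / (P {ω' | B ω' = b}).toReal *
          (A ω -
            (∫ ω', A ω' * (if B ω' = b then (1 : ℝ) else 0) ∂P) /
              (P {ω' | B ω' = b}).toReal) *
          s (A ω) (B ω) ∂P)
      0 := by
  have hsi : Integrable (fun ω => s (A ω) (B ω)) P :=
    .of_bound (hs.comp (hAm.prodMk hB)).aestronglyMeasurable C (.of_forall fun _ => hsC _ _)
  exact stmt_17_general (hB (measurableSet_singleton b)) hb hsi.integrableOn hA.integrableOn
    hAs.integrableOn
end

section
/- Let s : ℝ → ℝ be bounded measurable with ∫ s dμ = 0, and for |ε| < 1/‖s‖_∞ let μ_ε be the probability measure with density 1 + ε·s with respect to μ. Fix α ∈ (0,1) and let Q_ε be the α-quantile of μ_ε, i.e. the unique solution of μ_ε((−∞, Q_ε]) = α. Then: (i) ε ↦ Q_ε is differentiable at ε = 0 with p(Q₀)·(dQ_ε/dε)|_{ε=0} = − ∫ 1{y ≤ Q₀}·s(y) dμ(y); and (ii) ε ↦ ∫ y·1{y ≤ Q_ε} dμ_ε(y) is differentiable at ε = 0 with derivative ∫ [ (α − 1{y ≤ Q₀})·Q₀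 + y·1{y ≤ Q₀} ] · s(y) dμ(y). (The pathwise-derivative computation of Lemma C.3: the efficient influence function of a quantile-truncated mean.) -/
open MeasureTheory

/-!
Write `F t = μ (-∞, t]` and `S t = ∫_{(-∞, t]} s dμ`, so that the quantile equation is
`F (Q ε) + ε * S (Q ε) = α`. As `S` is bounded, `F (Q ε) → F (Q 0)`; since `F` is monotone and
`F' (Q 0) ≠ 0`, this forces `Q ε → Q 0`. Then `ε * S (Q ε)` has derivative `S (Q 0)` at `0`, no
differentiability of `S` being needed, and `Q` inherits the derivative `-S (Q 0) / F' (Q 0)` from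
`F ∘ Q`. The truncated mean is `G (Q ε) + ε * T (Q ε)` with `G`, `T` the integrals of `y` and
`y * s y` over `(-∞, t]`, and `G' (Q 0) = F' (Q 0) * Q 0`, whence its derivative.
-/

open Filter Set
open scoped Topology

section Real

lemma tendsto_of_monotone_of_tendsto_comp {ι : Type*} {l : Filter ι} {F : ℝ → ℝ} {Q : ι → ℝ}
    {q c : ℝ} (hF : Monotone F) (hF' : HasDerivAt F c q) (hc : c ≠ 0)
    (hQ : Tendsto (fun i => F (Q i)) l (𝓝 (F q))) : Tendsto Q l (𝓝 q) := by
  -- If `F` were constant on one side of `q`, then `q` would be a local extremum, forcing `c = 0`.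
  have lt_left : ∀ a < q, F a < F q := fun a ha => by
    by_contra! h
    have hmin : IsLocalMin F q := (lt_mem_nhds ha).mono fun x hx => h.trans (hF hx.le)
    exact hc (hmin.hasDerivAt_eq_zero hF')
  have lt_right : ∀ b > q, F q < F b := fun b hb => by
    by_contra! h
    have hmax : IsLocalMax F q := (gt_mem_nhds hb).mono fun x hx => (hF hx.le).trans h
    exact hc (hmax.hasDerivAt_eq_zero hF')
  refine tendsto_order.2 ⟨fun a ha => ?_, fun b hb => ?_⟩
  · exact (hQ.eventually_const_lt (lt_left a ha)).mono fun i => hF.reflect_lt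
  · exact (hQ.eventually_lt_const (lt_right b hb)).mono fun i => hF.reflect_lt

lemma hasDerivAt_sub_smul_of_continuousAt {𝕜 E : Type*} [NontriviallyNormedField 𝕜]
    [NormedAddCommGroup E] [NormedSpace 𝕜 E] {h : 𝕜 → E} {a : 𝕜} (hh : ContinuousAt h a) :
    HasDerivAt (fun x => (x - a) • h x) (h a) a := by
  rw [hasDerivAt_iff_tendsto_slope]
  refine (hh.tendsto.mono_left nhdsWithin_le_nhds).congr' ?_
  filter_upwards [self_mem_nhdsWithin] with x hx
  rw [slope_sub_smul _ (Ne.symm hx)]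

lemma eventually_abs_mul_lt_one (C : ℝ) : ∀ᶠ ε in 𝓝 (0 : ℝ), |ε| * C < 1 := by
  have hcont : ContinuousAt (fun ε : ℝ => |ε| * C) 0 := by fun_prop
  exact hcont.eventually_lt_const (by simp)

end Real

section Iic

variable {E : Type*} [NormedAddCommGroup E] [NormedSpace ℝ E] {μ : Measure ℝ} {t : ℝ}

lemma measure_singleton_eq_zero_of_continuousAt_Iic [IsFiniteMeasure μ]
    (hF : ContinuousAt (fun u => μ.real (Iic u)) t) : μ {t} = 0 := by
  have hle : ∀ u < t, μ.real {t} ≤ μ.real (Iic t) - μ.real (Iic u) := fun u hu => by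
    rw [← measureReal_sdiff (Iic_subset_Iic.2 hu.le) measurableSet_Iic]
    exact measureReal_mono (by simpa using hu)
  have hlim : Tendsto (fun u => μ.real (Iic t) - μ.real (Iic u)) (𝓝[<] t) (𝓝 0) := by
    simpa using (hF.tendsto.mono_left nhdsWithin_le_nhds).const_sub (μ.real (Iic t))
  have hnonpos : μ.real {t} ≤ 0 :=
    ge_of_tendsto hlim (eventually_nhdsWithin_of_forall hle)
  exact (measureReal_eq_zero_iff (by finiteness)).1 (hnonpos.antisymm measureReal_nonneg)

lemma continuousAt_setIntegral_Iic {f : ℝ → E} (hf : Integrable f μ) (ht : μ {t} = 0) :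
    ContinuousAt (fun u => ∫ y in Iic u, f y ∂μ) t := by
  have hprim : ContinuousAt (fun u => ∫ y in t..u, f y ∂μ) t :=
    (intervalIntegral.continuousWithinAt_primitive ht hf.intervalIntegrable).continuousAt
      (Icc_mem_nhds (sub_one_lt t) (lt_add_one t))
  refine (hprim.const_add (∫ y in Iic t, f y ∂μ)).congr (Eventually.of_forall fun u => ?_)
  simp only [← intervalIntegral.integral_Iic_sub_Iic hf.integrableOn hf.integrableOn,
    add_sub_cancel]

lemma hasDerivAt_setIntegral_Iic [CompleteSpace E] [IsFiniteMeasure μ] {f : ℝ → E} {c : ℝ}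
    (hf : Integrable f μ) (hft : ContinuousAt f t)
    (hF : HasDerivAt (fun u => μ.real (Iic u)) c t) :
    HasDerivAt (fun u => ∫ y in Iic u, f y ∂μ) (c • f t) t := by
  have hone : Integrable (fun _ : ℝ => (1 : ℝ)) μ := integrable_const 1
  have hmass : ∀ u, ∫ _ in t..u, (1 : ℝ) ∂μ = μ.real (Iic u) - μ.real (Iic t) := fun u => by
    rw [← intervalIntegral.integral_Iic_sub_Iic hone.integrableOn hone.integrableOn,
      setIntegral_one_eq_measureReal, setIntegral_one_eq_measureReal]
  have hconst : ∀ u, ∫ _ in t..u, f t ∂μ = (μ.real (Iic u) - μ.real (Iic t)) • f t := fun u => by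
    simp only [← hmass, ← intervalIntegral.integral_smul_const, one_smul]
  have hftc : (fun u => (∫ y in t..u, f y ∂μ) - (μ.real (Iic u) - μ.real (Iic t)) • f t)
      =o[𝓝 t] fun u => μ.real (Iic u) - μ.real (Iic t) := by
    simpa only [hmass, hconst, id] using
      intervalIntegral.measure_integral_sub_linear_isLittleO_of_tendsto_ae
        hf.1.stronglyMeasurableAtFilter (hft.tendsto.mono_left inf_le_left)
        tendsto_const_nhds tendsto_id
  have hprim := (hftc.trans_isBigO hF.isBigO_sub).add (hF.smul_const (f t)).isLittleO
  refine .of_isLittleO (hprim.congr_left fun u => ?_)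
  rw [intervalIntegral.integral_Iic_sub_Iic hf.integrableOn hf.integrableOn]
  module

lemma hasDerivAt_measureReal_Iic_of_eq_withDensity [IsFiniteMeasure μ] {ρ : ℝ → ENNReal}
    (hρ : AEMeasurable ρ) (hμ : μ = volume.withDensity ρ) (hρt : ContinuousAt ρ t)
    (hρt_top : ρ t ≠ ⊤) : HasDerivAt (fun u => μ.real (Iic u)) (ρ t).toReal t := by
  have hρ_int : ∫⁻ x, ρ x ≠ ⊤ := by
    simpa only [hμ, withDensity_apply _ MeasurableSet.univ, setLIntegral_univ] using
      measure_ne_top μ univ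
  have hint : Integrable fun x => (ρ x).toReal := integrable_toReal_of_lintegral_ne_top hρ hρ_int
  have hreal : ∀ u, μ.real (Iic u) = ∫ x in Iic u, (ρ x).toReal := fun u => by
    rw [hμ, measureReal_def, withDensity_apply _ measurableSet_Iic,
      integral_toReal hρ.restrict (ae_restrict_of_ae (ae_lt_top' hρ hρ_int))]
  have hIic : ∀ u, μ.real (Iic u) = μ.real (Iic t) + ∫ x in t..u, (ρ x).toReal := fun u => by
    rw [hreal, hreal, ← intervalIntegral.integral_Iic_sub_Iic hint.integrableOn hint.integrableOn,
      add_sub_cancel]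
  rw [funext hIic]
  exact (intervalIntegral.integral_hasDerivAt_right hint.intervalIntegrable
    hint.1.stronglyMeasurableAtFilter ((ENNReal.continuousAt_toReal hρt_top).comp hρt)).const_add _

end Iic

section Tilt

variable {μ : Measure ℝ} {s g Q : ℝ → ℝ}

lemma setIntegral_mul_one_add_mul {A : Set ℝ} (ε : ℝ) (hg : IntegrableOn g A μ)
    (hgs : IntegrableOn (fun y => g y * s y) A μ) :
    ∫ y in A, g y * (1 + ε * s y) ∂μ = ∫ y in A, g y ∂μ + ε * ∫ y in A, g y * s y ∂μ := by
  rw [← integral_const_mul, ← integral_add hg (hgs.const_mul ε)]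
  congr with y
  ring

lemma hasDerivAt_mul_setIntegral_Iic (hg : Integrable g μ) (hQ : ContinuousAt Q 0)
    (hatom : μ {Q 0} = 0) :
    HasDerivAt (fun ε => ε * ∫ y in Iic (Q ε), g y ∂μ) (∫ y in Iic (Q 0), g y ∂μ) 0 := by
  have hcont : ContinuousAt (fun ε => ∫ y in Iic (Q ε), g y ∂μ) 0 :=
    (continuousAt_setIntegral_Iic hg hatom).comp (f := Q) hQ
  simpa using hasDerivAt_sub_smul_of_continuousAt hcont

lemma integral_truncatedMean_influence_mul (α q : ℝ) (hs : Integrable s μ)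
    (hys : Integrable (fun y => y * s y) μ) (hs0 : ∫ y, s y ∂μ = 0) :
    ∫ y, ((α - (if y ≤ q then (1 : ℝ) else 0)) * q + y * (if y ≤ q then (1 : ℝ) else 0)) * s y ∂μ
      = ∫ y in Iic q, y * s y ∂μ - q * ∫ y in Iic q, s y ∂μ := by
  have hsplit : ∀ y, ((α - (if y ≤ q then (1 : ℝ) else 0)) * q
      + y * (if y ≤ q then (1 : ℝ) else 0)) * s y
      = α * q * s y + (Iic q).indicator (fun y => y * s y - q * s y) y := fun y => by
    by_cases hy : y ≤ q
    · simp only [hy, if_true, indicator_of_mem (mem_Iic.2 hy)]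
      ring
    · simp [hy]
  have htrunc : Integrable (fun y => y * s y - q * s y) μ := hys.sub (hs.const_mul q)
  simp_rw [hsplit]
  rw [integral_add (hs.const_mul _) (htrunc.indicator measurableSet_Iic), integral_const_mul, hs0,
    mul_zero, zero_add, integral_indicator measurableSet_Iic,
    integral_sub hys.integrableOn (hs.const_mul q).integrableOn, integral_const_mul]

variable [IsFiniteMeasure μ] {α c : ℝ}

lemma eventually_measureReal_Iic_quantile_tilt (hs : Integrable s μ)
    (hQ : ∀ᶠ ε in 𝓝 0, ∫ y in Iic (Q ε), (1 + ε * s y) ∂μ = α) :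
    ∀ᶠ ε in 𝓝 0, μ.real (Iic (Q ε)) = α - ε * ∫ y in Iic (Q ε), s y ∂μ := by
  filter_upwards [hQ] with ε hε
  have hsplit := setIntegral_mul_one_add_mul ε (integrable_const (μ := μ) 1).integrableOn
    (A := Iic (Q ε)) (by simpa only [one_mul] using hs.integrableOn)
  simp only [one_mul, hε, setIntegral_one_eq_measureReal] at hsplit
  linarith

lemma continuousAt_quantile_tilt (hs : Integrable s μ)
    (hQ : ∀ᶠ ε in 𝓝 0, ∫ y in Iic (Q ε), (1 + ε * s y) ∂μ = α)
    (hF : HasDerivAt (fun t => μ.real (Iic t)) c (Q 0)) (hc : c ≠ 0) : ContinuousAt Q 0 := by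
  have hQ' := eventually_measureReal_Iic_quantile_tilt hs hQ
  have hbound : ∀ ε, ‖∫ y in Iic (Q ε), s y ∂μ‖ ≤ ∫ y, ‖s y‖ ∂μ := fun ε =>
    (norm_integral_le_integral_norm s).trans
      (setIntegral_le_integral hs.norm (Eventually.of_forall fun y => norm_nonneg (s y)))
  have hzero : Tendsto (fun ε => ε * ∫ y in Iic (Q ε), s y ∂μ) (𝓝 0) (𝓝 0) :=
    tendsto_id.zero_mul_isBoundedUnder_le (isBoundedUnder_of ⟨_, hbound⟩)
  refine tendsto_of_monotone_of_tendsto_comp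
    (fun a b hab => measureReal_mono (Iic_subset_Iic.2 hab)) hF hc ?_
  have hlim : Tendsto (fun ε => α - ε * ∫ y in Iic (Q ε), s y ∂μ) (𝓝 0)
      (𝓝 (μ.real (Iic (Q 0)))) := by
    simpa [hQ'.self_of_nhds] using hzero.const_sub α
  exact hlim.congr' (hQ'.mono fun ε h => h.symm)

lemma hasDerivAt_quantile_tilt (hs : Integrable s μ)
    (hQ : ∀ᶠ ε in 𝓝 0, ∫ y in Iic (Q ε), (1 + ε * s y) ∂μ = α)
    (hF : HasDerivAt (fun t => μ.real (Iic t)) c (Q 0)) (hc : c ≠ 0) :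
    HasDerivAt Q (-(∫ y in Iic (Q 0), s y ∂μ) / c) 0 := by
  have hcont : ContinuousAt Q 0 := continuousAt_quantile_tilt hs hQ hF hc
  have hatom : μ {Q 0} = 0 := measure_singleton_eq_zero_of_continuousAt_Iic hF.continuousAt
  exact .of_comp_left hcont hF ((hasDerivAt_mul_setIntegral_Iic hs hcont hatom).const_sub α) hc
    (eventually_measureReal_Iic_quantile_tilt hs hQ)

lemma hasDerivAt_setIntegral_Iic_tilt {D : ℝ} (hg : Integrable g μ)
    (hgs : Integrable (fun y => g y * s y) μ) (hg_cont : ContinuousAt g (Q 0))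
    (hF : HasDerivAt (fun t => μ.real (Iic t)) c (Q 0)) (hQ : HasDerivAt Q D 0) :
    HasDerivAt (fun ε => ∫ y in Iic (Q ε), g y * (1 + ε * s y) ∂μ)
      (c * g (Q 0) * D + ∫ y in Iic (Q 0), g y * s y ∂μ) 0 := by
  have hatom : μ {Q 0} = 0 := measure_singleton_eq_zero_of_continuousAt_Iic hF.continuousAt
  simp only [setIntegral_mul_one_add_mul _ hg.integrableOn hgs.integrableOn]
  exact ((hasDerivAt_setIntegral_Iic hg hg_cont hF).comp 0 hQ).add
    (hasDerivAt_mul_setIntegral_Iic hgs hQ.continuousAt hatom)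

end Tilt

theorem stmt_18_general (μ : Measure ℝ) [IsFiniteMeasure μ] (s : ℝ → ℝ) (hy : Integrable id μ)
    (hs : Integrable s μ) (hys : Integrable (fun y => y * s y) μ) (hs0 : ∫ y, s y ∂μ = 0)
    (α : ℝ) (Q : ℝ → ℝ) (hQ : ∀ᶠ ε in 𝓝 0, ∫ y in Iic (Q ε), (1 + ε * s y) ∂μ = α)
    (c : ℝ) (hF : HasDerivAt (fun t => μ.real (Iic t)) c (Q 0)) (hc : c ≠ 0) :
    (∃ D : ℝ, HasDerivAt Q D 0 ∧ c * D = -(∫ y in Iic (Q 0), s y ∂μ)) ∧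
    HasDerivAt (fun ε : ℝ => ∫ y in Iic (Q ε), y * (1 + ε * s y) ∂μ)
      (∫ y, ((α - (if y ≤ Q 0 then (1 : ℝ) else 0)) * Q 0 +
          y * (if y ≤ Q 0 then (1 : ℝ) else 0)) * s y ∂μ)
      0 := by
  have hQ' := hasDerivAt_quantile_tilt hs hQ hF hc
  refine ⟨⟨_, hQ', mul_div_cancel₀ _ hc⟩, ?_⟩
  refine (hasDerivAt_setIntegral_Iic_tilt hy hys continuousAt_id hF hQ').congr_deriv ?_
  rw [integral_truncatedMean_influence_mul α (Q 0) hs hys hs0]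
  simp only [id]
  field_simp
  ring

/-- The pathwise-derivative computation of Lemma C.3 (efficient influence function of a
quantile-truncated mean).  With `μ_ε` the tilt of `μ` by `1 + ε s` and `Q ε` its
`α`-quantile: (i) `ε ↦ Q ε` is differentiable at `0` with
`p(Q 0) Q'(0) = -∫ 1{y ≤ Q 0} s(y) dμ`, and (ii) `ε ↦ ∫ y 1{y ≤ Q ε} dμ_ε` is
differentiable at `0` with derivative `∫ ((α - 1{y ≤ Q 0}) Q 0 + y 1{y ≤ Q 0}) s(y) dμ`. -/
theorem stmt_18 (μ : Measure ℝ) [IsProbabilityMeasure μ] (p : ℝ → ℝ)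
    (hp_cont : Continuous p) (hp_pos : ∀ x, 0 < p x)
    (hμ : μ = MeasureTheory.volume.withDensity fun x => ENNReal.ofReal (p x))
    (hmom : Integrable (fun y => y ^ 2) μ)
    (s : ℝ → ℝ) (hs : Measurable s) (C : ℝ) (hsC : ∀ y, |s y| ≤ C)
    (hs0 : (∫ y, s y ∂μ) = 0)
    (α : ℝ) (hα : α ∈ Set.Ioo (0 : ℝ) 1)
    (Q : ℝ → ℝ)
    (hQ : ∀ ε : ℝ, |ε| * C < 1 → (∫ y in Set.Iic (Q ε), (1 + ε * s y) ∂μ) = α) :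
    (∃ D : ℝ, HasDerivAt Q D 0 ∧ p (Q 0) * D = -(∫ y in Set.Iic (Q 0), s y ∂μ)) ∧
    HasDerivAt (fun ε : ℝ => ∫ y in Set.Iic (Q ε), y * (1 + ε * s y) ∂μ)
      (∫ y, ((α - (if y ≤ Q 0 then (1 : ℝ) else 0)) * Q 0 +
          y * (if y ≤ Q 0 then (1 : ℝ) else 0)) * s y ∂μ)
      0 := by
  have hs_bound : ∀ᵐ y ∂μ, ‖s y‖ ≤ C := .of_forall hsC
  have hid : Integrable id μ :=
    ((memLp_two_iff_integrable_sq aestronglyMeasurable_id).2 hmom).integrable one_le_two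
  have hF : HasDerivAt (fun t => μ.real (Iic t)) (p (Q 0)) (Q 0) := by
    simpa only [ENNReal.toReal_ofReal (hp_pos _).le] using
      hasDerivAt_measureReal_Iic_of_eq_withDensity (by fun_prop) hμ
        (ENNReal.continuous_ofReal.comp hp_cont).continuousAt ENNReal.ofReal_ne_top
  exact stmt_18_general μ s hid (.of_bound hs.aestronglyMeasurable C hs_bound)
    (hid.mul_bdd hs.aestronglyMeasurable hs_bound) hs0 α Q
    ((eventually_abs_mul_lt_one C).mono hQ) _ hF (hp_pos _).ne'
end

section
/- Let ν be a Borel probability measure on ℝ with finite first moment and with ν({q}) = ν({q̂}) = 0, and let α, q, q̂, w₋, w₊ be real numbers. Define g₊(y) := (1 − α − 1{y > q})·q + y·1{y > q}, ĝ₊(y) := (1 − α − 1{y > q̂})·q̂ + y·1{y > q̂}, g₋(y) := (α − 1{y < q})·q + y·1{y < q}, and ĝ₋(y) := (α − 1{y < q̂})·q̂ + y·1{y < q̂}. Then ∫ [ w₊·(ĝ₊(y) − g₊(y)) + w₋·(ĝ₋(y) − g₋(y)) ] dν(y) = (w₊ − w₋) · [ (q̂ − q)·(ν({y : y < q̂})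 − α) − ∫ |y − q|·1{ min(q,q̂) < y < max(q,q̂) } dν(y) ]. (The deterministic bias decomposition identity proved in Appendix F for the one-step estimator in the L∞-analysis.) -/
open MeasureTheory

/-!
For every threshold `q`, the two scores add up to the outcome: `g₊ y + g₋ y = y`. Replacing `q` by
`q̂` therefore moves `g₊` and `g₋` by opposite amounts, and the weighted sum of the two changes is
`w₋ - w₊` times the change of `g₋`. Since `g₋ y = α * q - max (q - y) 0`, that change is affine in
`1{y < q̂}` up to the error `|y - q|` on the interval between the thresholds, which vanishes at `q`.
With the left endpoint of that interval included the identity holds for every `y`; only an atom at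
`q̂` can make the open interval give a different integral.
-/

open Set

section Pointwise

variable {R : Type*} [CommRing R] [LinearOrder R]

/-- The score `g₊` at outcome `y` and threshold `q`. Its mean is the upper-tail expectation
`E[Y 1{Y > q}]` whenever `q` is exceeded with probability `1 - α`. -/
def upperTailScore (α q y : R) : R :=
  (1 - α - if q < y then 1 else 0) * q + y * if q < y then 1 else 0

/-- The score `g₋` at outcome `y` and threshold `q`. Its mean is the lower-tail expectation
`E[Y 1{Y < q}]` whenever the outcome lies below `q` with probability `α`. -/
def lowerTailScore (α q y : R) : R :=
  (α - if y < q then 1 else 0) * q + y * if y < q then 1 else 0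

theorem upperTailScore_add_lowerTailScore (α q y : R) :
    upperTailScore α q y + lowerTailScore α q y = y := by
  unfold upperTailScore lowerTailScore
  rcases lt_trichotomy y q with h | rfl | h
  · simp only [h, h.not_gt, if_true, if_false]
    ring
  · simp only [lt_irrefl, if_false]
    ring
  · simp only [h, h.not_gt, if_true, if_false]
    ring

theorem weighted_tailScore_sub (α q r wm wp y : R) :
    wp * (upperTailScore α r y - upperTailScore α q y) +
        wm * (lowerTailScore α r y - lowerTailScore α q y) =
      (wm - wp) * (lowerTailScore α r y - lowerTailScore α q y) := by
  linear_combination wp * upperTailScore_add_lowerTailScore α r y -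
    wp * upperTailScore_add_lowerTailScore α q y

theorem lowerTailScore_sub_lowerTailScore [IsOrderedAddMonoid R] (α q r y : R) :
    lowerTailScore α r y - lowerTailScore α q y =
      (r - q) * (α - (Iio r).indicator 1 y) +
        (Ico (min q r) (max q r)).indicator (fun y ↦ |y - q|) y := by
  simp only [lowerTailScore, indicator_apply, mem_Iio, mem_Ico, min_le_iff, lt_max_iff,
    Pi.one_apply]
  rcases lt_or_ge y q with hq | hq <;> rcases lt_or_ge y r with hr | hr
  · simp only [hq, hr, hq.not_ge, hr.not_ge, or_self, false_and, if_true, if_false]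
    ring
  · simp only [hq, hr, hr.not_gt, or_true, true_or, and_self, if_true, if_false,
      abs_of_neg (sub_neg.2 hq)]
    ring
  · simp only [hq, hr, hq.not_gt, or_true, true_or, and_self, if_true, if_false,
      abs_of_nonneg (sub_nonneg.2 hq)]
    ring
  · simp only [hq.not_gt, hr.not_gt, or_self, and_false, if_false]
    ring

end Pointwise

theorem integral_lowerTailScore_sub_lowerTailScore (ν : Measure ℝ) [IsFiniteMeasure ν]
    (α q r : ℝ) :
    ∫ y, (lowerTailScore α r y - lowerTailScore α q y) ∂ν =
      (r - q) * (α * ν.real univ - ν.real (Iio r)) +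
        ∫ y in Ico (min q r) (max q r), |y - q| ∂ν := by
  have integrable_below : Integrable ((Iio r).indicator (1 : ℝ → ℝ)) ν :=
    (integrable_const 1).indicator measurableSet_Iio
  have integrable_between :
      Integrable ((Ico (min q r) (max q r)).indicator fun y ↦ |y - q|) ν := by
    have continuous_dist : Continuous fun y : ℝ ↦ |y - q| := by fun_prop
    exact (continuous_dist.integrableOn_Icc.mono_set Ico_subset_Icc_self).integrable_indicator
      measurableSet_Ico
  have integrable_level_sub : Integrable (fun y ↦ α - (Iio r).indicator (1 : ℝ → ℝ) y) ν :=
    (integrable_const α).sub integrable_below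
  simp_rw [lowerTailScore_sub_lowerTailScore]
  rw [integral_add (integrable_level_sub.const_mul _) integrable_between,
    integral_const_mul, integral_sub (integrable_const α) integrable_below, integral_const,
    integral_indicator_one measurableSet_Iio, integral_indicator measurableSet_Ico,
    smul_eq_mul, mul_comm α]

theorem integral_abs_sub_mul_ite_between {ν : Measure ℝ} {r : ℝ} (hr : ν {r} = 0) (q : ℝ) :
    ∫ y, |y - q| * (if min q r < y ∧ y < max q r then (1 : ℝ) else 0) ∂ν =
      ∫ y in Ico (min q r) (max q r), |y - q| ∂ν := by
  have ae_ne : ∀ᵐ y ∂ν, y ≠ r := by simpa [ae_iff] using hr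
  rw [← integral_indicator measurableSet_Ico]
  refine integral_congr_ae ?_
  filter_upwards [ae_ne] with y hy
  rcases eq_or_ne y q with rfl | hyq
  · simp [indicator_apply]
  · have ne_min : min q r ≠ y := by grind
    simp [indicator_apply, ne_min.le_iff_lt]

theorem stmt_19_general (ν : Measure ℝ) [IsFiniteMeasure ν] (q qh α wm wp : ℝ) :
    ∫ y, (wp * (upperTailScore α qh y - upperTailScore α q y) +
        wm * (lowerTailScore α qh y - lowerTailScore α q y)) ∂ν =
      (wp - wm) * ((qh - q) * (ν.real (Iio qh) - α * ν.real univ) -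
        ∫ y in Ico (min q qh) (max q qh), |y - q| ∂ν) := by
  simp_rw [weighted_tailScore_sub]
  rw [integral_const_mul, integral_lowerTailScore_sub_lowerTailScore]
  ring

/-- The deterministic bias decomposition identity of Appendix F for the one-step estimator
in the `L∞`-analysis: for a Borel probability measure `ν` with finite first moment and no
atoms at `q` and `q̂`,
`∫ [w₊ (ĝ₊ - g₊) + w₋ (ĝ₋ - g₋)] dν
  = (w₊ - w₋) [(q̂ - q)(ν{y < q̂} - α) - ∫ |y - q| 1{min(q,q̂) < y < max(q,q̂)} dν]`. -/
theorem stmt_19 (ν : Measure ℝ) [IsProbabilityMeasure ν]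
    (hmom : Integrable (fun y => y) ν)
    (q qh : ℝ) (hq : ν {q} = 0) (hqh : ν {qh} = 0)
    (α wm wp : ℝ) :
    (∫ y, (wp * (((1 - α - (if qh < y then (1 : ℝ) else 0)) * qh +
              y * (if qh < y then (1 : ℝ) else 0)) -
            ((1 - α - (if q < y then (1 : ℝ) else 0)) * q +
              y * (if q < y then (1 : ℝ) else 0))) +
          wm * (((α - (if y < qh then (1 : ℝ) else 0)) * qh +
              y * (if y < qh then (1 : ℝ) else 0)) -
            ((α - (if y < q then (1 : ℝ) else 0)) * q +
              y * (if y < q then (1 : ℝ) else 0)))) ∂ν) =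
      (wp - wm) *
        ((qh - q) * ((ν (Set.Iio qh)).toReal - α) -
          ∫ y, |y - q| * (if min q qh < y ∧ y < max q qh then (1 : ℝ) else 0) ∂ν) := by
  rw [integral_abs_sub_mul_ite_between hqh, ← measureReal_def]
  simpa only [upperTailScore, lowerTailScore, probReal_univ, mul_one] using
    stmt_19_general ν q qh α wm wp
end
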